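/- arXiv:2007.12625 — 3 statements merged into one kernel-verified Lean document; each statement's English description precedes it below -/
import Mathlib

section
/- Convergence of the deterministic accelerated zeroth-order Frank–Wolfe method (Acc-ZO-FW): let T ≥ 3 be an integer, set the step size η = T^{-1/2}, the smoothing parameter μ = d^{-1/2} T^{-1/2}, and run the momentum Frank–Wolfe iteration with gradient surrogates v_t = (1/n) ∑_{i=1}^n ∇̂_coo f_i(z_t). If Δ ≥ 0 satisfies f(x) − inf_{y∈X} f(y) ≤ Δ for all x ∈ X, then (1/T) ∑_{t=1}^{T-1} G(z_t) ≤ (Δ + 4LD² + 2DL)/√T + (D L ln T)/T^{3/2}. -/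
open scoped RealInnerProductSpace

/-- The Frank–Wolfe (duality) gap of `f` over `X` at `x`:
`G(x) = sup_{w ∈ X} ⟪w − x, −∇f(x)⟫`. -/
noncomputable def fwGap {d : ℕ} (f : EuclideanSpace ℝ (Fin d) → ℝ)
    (X : Set (EuclideanSpace ℝ (Fin d))) (x : EuclideanSpace ℝ (Fin d)) : ℝ :=
  sSup ((fun w => ⟪w - x, -gradient f x⟫) '' X)

/-!
The momentum enters only through the scaled lag `u t = (t + 1) (x t - z t)`, which satisfies
`u (t + 1) = (1 - γ t) u t + η / (t + 2) (w t - z t)`, while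
`z (t + 1) - z t = η (w t - z t) + u (t + 1) / ((t + 1) (t + 2))`. Hence `‖u t‖ ≤ t η D / 2`, and
since `w t` almost minimizes `⟪∇f (z t), ·⟫` and `∇f` drifts by `O(η)` per step,
`⟪∇f (z t), u (t + 1)⟫` grows at most quadratically in `t`. Momentum therefore perturbs the ordinary
Frank–Wolfe descent step by only `O(η²)`. Central differences along the coordinate axes give a
gradient error of at most `L μ √d / 2 = L η / 2`, so telescoping the descent inequality and
dividing by `η T = √T` yields the rate, without a logarithmic term.
-/

section Smooth

open scoped Gradient NNReal

variable {E : Type*} [NormedAddCommGroup E] [InnerProductSpace ℝ E] [CompleteSpace E]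

theorem abs_sub_sub_inner_gradient_le {f : E → ℝ} {K : ℝ≥0} (hf : Differentiable ℝ f)
    (hK : LipschitzWith K (∇ f)) (p q : E) :
    |f q - f p - ⟪∇ f p, q - p⟫| ≤ K / 2 * ‖q - p‖ ^ 2 := by
  set φ : ℝ → ℝ := fun s => f (p + s • (q - p)) - f p - s * ⟪∇ f p, q - p⟫
  have hφ (s : ℝ) : HasDerivAt φ ⟪∇ f (p + s • (q - p)) - ∇ f p, q - p⟫ s := by
    have hpath : HasDerivAt (fun s : ℝ => p + s • (q - p)) (q - p) s := by
      simpa using ((hasDerivAt_id s).smul_const (q - p)).const_add p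
    have hcomp := (hf (p + s • (q - p))).hasFDerivAt.comp_hasDerivAt s hpath
    rw [← inner_gradient_left] at hcomp
    rw [inner_sub_left]
    exact (hcomp.sub_const (f p)).sub (hasDerivAt_mul_const _)
  have hbound (s : ℝ) (hs : s ∈ Set.Ico (0 : ℝ) 1) :
      ‖⟪∇ f (p + s • (q - p)) - ∇ f p, q - p⟫‖ ≤ K / 2 * ‖q - p‖ ^ 2 * (2 * s) := by
    calc ‖⟪∇ f (p + s • (q - p)) - ∇ f p, q - p⟫‖
        ≤ ‖∇ f (p + s • (q - p)) - ∇ f p‖ * ‖q - p‖ := norm_inner_le_norm _ _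
      _ ≤ K * ‖p + s • (q - p) - p‖ * ‖q - p‖ := by gcongr; exact hK.norm_sub_le _ _
      _ = K / 2 * ‖q - p‖ ^ 2 * (2 * s) := by
        rw [add_sub_cancel_left, norm_smul, Real.norm_of_nonneg hs.1]; ring
  have hquad (s : ℝ) : HasDerivAt (fun s : ℝ => K / 2 * ‖q - p‖ ^ 2 * s ^ 2)
      (K / 2 * ‖q - p‖ ^ 2 * (2 * s)) s := by
    simpa using (hasDerivAt_pow 2 s).const_mul (K / 2 * ‖q - p‖ ^ 2)
  simpa [φ] using image_norm_le_of_norm_deriv_right_le_deriv_boundary (a := 0) (b := 1)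
    (fun s _ => (hφ s).continuousAt.continuousWithinAt) (fun s _ => (hφ s).hasDerivWithinAt)
    (by simp [φ]) hquad hbound (Set.right_mem_Icc.2 zero_le_one)

theorem abs_centralDiff_sub_inner_gradient_le {f : E → ℝ} {K : ℝ≥0} (hf : Differentiable ℝ f)
    (hK : LipschitzWith K (∇ f)) {μ : ℝ} (hμ : 0 < μ) (u e : E) :
    |(f (u + μ • e) - f (u - μ • e)) / (2 * μ) - ⟪∇ f u, e⟫| ≤ K / 2 * (μ * ‖e‖ ^ 2) := by
  have hfwd := abs_sub_sub_inner_gradient_le hf hK u (u + μ • e)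
  have hbwd := abs_sub_sub_inner_gradient_le hf hK u (u - μ • e)
  simp only [add_sub_cancel_left, sub_sub_cancel_left, norm_neg, inner_neg_right,
    real_inner_smul_right, norm_smul, Real.norm_of_nonneg hμ.le, abs_le] at hfwd hbwd
  have hquot : (f (u + μ • e) - f (u - μ • e)) / (2 * μ) - ⟪∇ f u, e⟫
      = (f (u + μ • e) - f (u - μ • e) - 2 * μ * ⟪∇ f u, e⟫) / (2 * μ) := by
    field_simp
  rw [hquot, abs_div, abs_of_pos (by positivity : 0 < 2 * μ), div_le_iff₀ (by positivity), abs_le]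
  constructor <;> linarith

theorem gradient_const_mul_sum {ι : Type*} {s : Finset ι} {f : ι → E → ℝ} {u : E}
    (hf : ∀ i ∈ s, DifferentiableAt ℝ (f i) u) (c : ℝ) :
    ∇ (fun u => c * ∑ i ∈ s, f i u) u = c • ∑ i ∈ s, ∇ (f i) u := by
  refine HasGradientAt.gradient (hasGradientAt_iff_hasFDerivAt.2 ?_)
  simpa [map_sum] using
    (HasFDerivAt.fun_sum fun i hi => (hf i hi).hasGradientAt.hasFDerivAt).const_mul c

end Smooth

section Average

theorem norm_average_sub_average_le {F ι : Type*} [SeminormedAddCommGroup F] [NormedSpace ℝ F]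
    [Fintype ι] [Nonempty ι] {a b : ι → F} {C : ℝ} (h : ∀ i, ‖a i - b i‖ ≤ C) :
    ‖(1 / (Fintype.card ι : ℝ)) • ∑ i, a i - (1 / (Fintype.card ι : ℝ)) • ∑ i, b i‖ ≤ C := by
  rw [← smul_sub, ← Finset.sum_sub_distrib, norm_smul, Real.norm_of_nonneg (by positivity)]
  calc 1 / (Fintype.card ι : ℝ) * ‖∑ i, (a i - b i)‖
      ≤ 1 / (Fintype.card ι : ℝ) * ∑ _i : ι, C := by
        gcongr; exact norm_sum_le_of_le _ fun i _ => h i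
    _ = C := by simp

open scoped Gradient NNReal

theorem lipschitzWith_gradient_average {E κ : Type*} [NormedAddCommGroup E]
    [InnerProductSpace ℝ E] [CompleteSpace E] [Fintype κ] [Nonempty κ] {fs : κ → E → ℝ} {K : ℝ≥0}
    (hf : ∀ i, Differentiable ℝ (fs i)) (hK : ∀ i, LipschitzWith K (∇ (fs i))) :
    LipschitzWith K (∇ fun u => (1 / (Fintype.card κ : ℝ)) * ∑ i, fs i u) := by
  refine lipschitzWith_iff_norm_sub_le.2 fun u u' => ?_
  rw [gradient_const_mul_sum (fun i _ => hf i u), gradient_const_mul_sum (fun i _ => hf i u')]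
  exact norm_average_sub_average_le fun i => (hK i).norm_sub_le u u'

end Average

section CoordGradient

open scoped Gradient NNReal

variable {ι : Type*} [Fintype ι] [DecidableEq ι]

/-- The coordinate-wise central-difference gradient estimator `∇̂_coo f` with smoothing
parameter `μ`. -/
noncomputable def coordGradient (μ : ℝ) (f : EuclideanSpace ℝ ι → ℝ) (u : EuclideanSpace ℝ ι) :
    EuclideanSpace ℝ ι :=
  ∑ j, ((f (u + μ • EuclideanSpace.single j 1) - f (u - μ • EuclideanSpace.single j 1))
    / (2 * μ)) • EuclideanSpace.single j 1

theorem coordGradient_apply (μ : ℝ) (f : EuclideanSpace ℝ ι → ℝ) (u : EuclideanSpace ℝ ι)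
    (j : ι) :
    coordGradient μ f u j = (f (u + μ • EuclideanSpace.single j 1)
      - f (u - μ • EuclideanSpace.single j 1)) / (2 * μ) := by
  simp [coordGradient, WithLp.ofLp_sum, Finset.sum_apply, Pi.single_apply]

theorem norm_coordGradient_sub_gradient_le {f : EuclideanSpace ℝ ι → ℝ} {K : ℝ≥0}
    (hf : Differentiable ℝ f) (hK : LipschitzWith K (∇ f)) {μ : ℝ} (hμ : 0 < μ)
    (u : EuclideanSpace ℝ ι) :
    ‖coordGradient μ f u - ∇ f u‖ ≤ K / 2 * (μ * √(Fintype.card ι)) := by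
  have hcoord (j : ι) : ‖(coordGradient μ f u - ∇ f u) j‖ ≤ K / 2 * μ := by
    have h := abs_centralDiff_sub_inner_gradient_le hf hK hμ u (EuclideanSpace.single j 1)
    simpa [coordGradient_apply, EuclideanSpace.inner_single_right, -inner_gradient_left] using h
  calc ‖coordGradient μ f u - ∇ f u‖
      = √(∑ j, ‖(coordGradient μ f u - ∇ f u) j‖ ^ 2) := EuclideanSpace.norm_eq _
    _ ≤ √(∑ _j : ι, (K / 2 * μ) ^ 2) := by gcongr with j; exact hcoord j
    _ = K / 2 * (μ * √(Fintype.card ι)) := by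
      rw [Finset.sum_const, Finset.card_univ, nsmul_eq_mul, Real.sqrt_mul (Nat.cast_nonneg _),
        Real.sqrt_sq (by positivity)]
      ring

theorem norm_average_coordGradient_sub_gradient_le {κ : Type*} [Fintype κ] [Nonempty κ]
    {fs : κ → EuclideanSpace ℝ ι → ℝ} {K : ℝ≥0} (hf : ∀ i, Differentiable ℝ (fs i))
    (hK : ∀ i, LipschitzWith K (∇ (fs i))) {μ : ℝ} (hμ : 0 < μ) (u : EuclideanSpace ℝ ι) :
    ‖(1 / (Fintype.card κ : ℝ)) • ∑ i, coordGradient μ (fs i) u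
        - ∇ (fun u => (1 / (Fintype.card κ : ℝ)) * ∑ i, fs i u) u‖
      ≤ K / 2 * (μ * √(Fintype.card ι)) := by
  rw [gradient_const_mul_sum fun i _ => hf i u]
  exact norm_average_sub_average_le fun i =>
    norm_coordGradient_sub_gradient_le (hf i) (hK i) hμ u

end CoordGradient

/-- The step size `γ_t = (1 + θ_t) η`, with `θ_t = 1 / ((t + 1) (t + 2))`, of the auxiliary
sequence `x` of accelerated Frank–Wolfe. -/
noncomputable def auxStep (η : ℝ) (t : ℕ) : ℝ :=
  (1 + 1 / (((t : ℝ) + 1) * ((t : ℝ) + 2))) * η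

theorem auxStep_nonneg {η : ℝ} (hη : 0 ≤ η) (t : ℕ) : 0 ≤ auxStep η t := by
  unfold auxStep; positivity

theorem auxStep_le_one {η : ℝ} (hη₀ : 0 ≤ η) (hη : η ≤ 2 / 3) (t : ℕ) : auxStep η t ≤ 1 := by
  have hθ : 1 / (((t : ℝ) + 1) * ((t : ℝ) + 2)) ≤ 1 / ((0 + 1) * (0 + 2)) := by
    gcongr <;> positivity
  calc auxStep η t ≤ (1 + 1 / ((0 + 1) * (0 + 2))) * (2 / 3) := by unfold auxStep; gcongr
    _ = 1 := by norm_num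

/-- The iteration of accelerated Frank–Wolfe over `X` with step size `η`, gradient surrogates `v`
and linear minimizers `w`. With `α_t = 1 / (t + 1)`, the coefficient in `z_succ` is `α_{t+1}`. -/
structure IsAccFrankWolfe {E : Type*} [NormedAddCommGroup E] [InnerProductSpace ℝ E]
    (X : Set E) (η : ℝ) (v w x y z : ℕ → E) : Prop where
  x_zero : x 0 = z 0
  z_zero_mem : z 0 ∈ X
  w_mem : ∀ t, w t ∈ X
  inner_le : ∀ t, ∀ p ∈ X, ⟪p, -(v t)⟫ ≤ ⟪w t, -(v t)⟫
  x_succ : ∀ t, x (t + 1) = x t + auxStep η t • (w t - x t)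
  y_succ : ∀ t, y (t + 1) = z t + η • (w t - z t)
  z_succ : ∀ t : ℕ, z (t + 1)
    = (1 - 1 / ((t : ℝ) + 2)) • y (t + 1) + (1 / ((t : ℝ) + 2)) • x (t + 1)

/-- The deviation `x t - z t` caused by the momentum, scaled by `t + 1` so that its recursion
`IsAccFrankWolfe.lag_succ` has no fractions of `t` in front of the previous term. -/
def lag {E : Type*} [AddCommGroup E] [Module ℝ E] (x z : ℕ → E) (t : ℕ) : E :=
  ((t : ℝ) + 1) • (x t - z t)

/-- The Frank–Wolfe gap in an arbitrary Hilbert space; in `EuclideanSpace ℝ (Fin d)` it is `fwGap`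
by definition. -/
noncomputable def dualityGap {E : Type*} [NormedAddCommGroup E] [InnerProductSpace ℝ E]
    [CompleteSpace E] (f : E → ℝ) (X : Set E) (u : E) : ℝ :=
  sSup ((fun p => ⟪p - u, -gradient f u⟫) '' X)

theorem one_div_sqrt_le_two_thirds {a : ℝ} (ha : 9 / 4 ≤ a) : 1 / √a ≤ 2 / 3 :=
  calc 1 / √a ≤ 1 / (3 / 2) := by gcongr; exact Real.le_sqrt_of_sq_le (by linarith)
    _ = 2 / 3 := by norm_num

namespace IsAccFrankWolfe

open scoped Gradient NNReal

variable {E : Type*} [NormedAddCommGroup E] [InnerProductSpace ℝ E]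
  {X : Set E} {η D δ : ℝ} {v w x y z : ℕ → E}

theorem mem (h : IsAccFrankWolfe X η v w x y z) (hX : Convex ℝ X) (hη₀ : 0 ≤ η)
    (hη : η ≤ 2 / 3) (t : ℕ) : x t ∈ X ∧ z t ∈ X := by
  induction t with
  | zero => exact ⟨h.x_zero ▸ h.z_zero_mem, h.z_zero_mem⟩
  | succ t ih =>
    have hx : x (t + 1) ∈ X := h.x_succ t ▸
      hX.add_smul_sub_mem ih.1 (h.w_mem t) ⟨auxStep_nonneg hη₀ t, auxStep_le_one hη₀ hη t⟩
    have hy : y (t + 1) ∈ X := h.y_succ t ▸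
      hX.add_smul_sub_mem ih.2 (h.w_mem t) ⟨hη₀, by linarith⟩
    have hα : 1 / ((t : ℝ) + 2) ≤ 1 := div_le_one_of_le₀ (by linarith [t.cast_nonneg (α := ℝ)])
      (by positivity)
    exact ⟨hx, h.z_succ t ▸ hX hy hx (by linarith) (by positivity) (by ring)⟩

theorem norm_w_sub_z_le (h : IsAccFrankWolfe X η v w x y z) (hX : Convex ℝ X)
    (hdiam : ∀ p ∈ X, ∀ q ∈ X, ‖p - q‖ ≤ D) (hη₀ : 0 ≤ η) (hη : η ≤ 2 / 3) (t : ℕ) :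
    ‖w t - z t‖ ≤ D :=
  hdiam _ (h.w_mem t) _ (h.mem hX hη₀ hη t).2

theorem inner_w_sub_le (h : IsAccFrankWolfe X η v w x y z)
    (hdiam : ∀ p ∈ X, ∀ q ∈ X, ‖p - q‖ ≤ D) {t : ℕ} {g : E} (hg : ‖v t - g‖ ≤ δ)
    {p : E} (hp : p ∈ X) : ⟪g, w t - p⟫ ≤ D * δ := by
  have hopt : ⟪v t, w t - p⟫ ≤ 0 := by
    have := h.inner_le t p hp
    rw [inner_neg_right, inner_neg_right, real_inner_comm, real_inner_comm _ (w t)] at this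
    rw [inner_sub_right]
    linarith
  calc ⟪g, w t - p⟫ = ⟪v t, w t - p⟫ + ⟪g - v t, w t - p⟫ := by rw [inner_sub_left]; ring
    _ ≤ 0 + ‖g - v t‖ * ‖w t - p‖ := add_le_add hopt (real_inner_le_norm _ _)
    _ ≤ 0 + δ * D := by
      have hδ : 0 ≤ δ := (norm_nonneg _).trans hg
      rw [norm_sub_rev g]
      gcongr
      exact hdiam _ (h.w_mem t) _ hp
    _ = D * δ := by ring

theorem lag_zero (h : IsAccFrankWolfe X η v w x y z) : lag x z 0 = 0 := by
  simp [lag, h.x_zero]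

theorem lag_succ_eq_smul_x_sub_y (h : IsAccFrankWolfe X η v w x y z) (t : ℕ) :
    lag x z (t + 1) = ((t : ℝ) + 1) • (x (t + 1) - y (t + 1)) := by
  have hα : ((t : ℝ) + 2) * (1 - 1 / (t + 2)) = t + 1 := by field_simp; ring
  rw [lag, h.z_succ, ← hα]
  push_cast
  module

theorem lag_succ (h : IsAccFrankWolfe X η v w x y z) (t : ℕ) :
    lag x z (t + 1) = (1 - auxStep η t) • lag x z t + (η / (t + 2)) • (w t - z t) := by
  have hθ : ((t : ℝ) + 1) * (auxStep η t - η) = η / (t + 2) := by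
    unfold auxStep; field_simp; ring
  rw [h.lag_succ_eq_smul_x_sub_y, h.x_succ, h.y_succ, lag, ← hθ]
  module

theorem z_succ_sub_z (h : IsAccFrankWolfe X η v w x y z) (t : ℕ) :
    z (t + 1) - z t
      = η • (w t - z t) + (1 / (((t : ℝ) + 1) * (t + 2))) • lag x z (t + 1) := by
  have hα : 1 / (((t : ℝ) + 1) * (t + 2)) * (t + 1) = 1 / (t + 2) := by field_simp
  rw [h.lag_succ_eq_smul_x_sub_y, smul_smul, hα, h.z_succ, h.y_succ]
  module

theorem norm_lag_le (h : IsAccFrankWolfe X η v w x y z) (hX : Convex ℝ X)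
    (hdiam : ∀ p ∈ X, ∀ q ∈ X, ‖p - q‖ ≤ D) (hη₀ : 0 ≤ η) (hη : η ≤ 2 / 3) (t : ℕ) :
    ‖lag x z t‖ ≤ t * (η * D / 2) := by
  induction t with
  | zero => simp [h.lag_zero]
  | succ t ih =>
    have hγ₀ := auxStep_nonneg hη₀ t
    have hγ₁ : 0 ≤ 1 - auxStep η t := sub_nonneg.2 (auxStep_le_one hη₀ hη t)
    have hw := h.norm_w_sub_z_le hX hdiam hη₀ hη t
    calc ‖lag x z (t + 1)‖
        ≤ (1 - auxStep η t) * ‖lag x z t‖ + η / (t + 2) * ‖w t - z t‖ := by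
          rw [h.lag_succ]
          refine (norm_add_le _ _).trans_eq ?_
          rw [norm_smul, norm_smul, Real.norm_of_nonneg hγ₁, Real.norm_of_nonneg (by positivity)]
      _ ≤ 1 * (t * (η * D / 2)) + η / (0 + 2) * D := by
          gcongr
          · linarith
          · positivity
      _ = (t + 1 : ℕ) * (η * D / 2) := by push_cast; ring

theorem norm_z_succ_sub_z_le (h : IsAccFrankWolfe X η v w x y z) (hX : Convex ℝ X)
    (hdiam : ∀ p ∈ X, ∀ q ∈ X, ‖p - q‖ ≤ D) (hη₀ : 0 ≤ η) (hη : η ≤ 2 / 3) (t : ℕ) :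
    ‖z (t + 1) - z t‖ ≤ 5 / 4 * (η * D) := by
  have hw := h.norm_w_sub_z_le hX hdiam hη₀ hη t
  have hD : 0 ≤ D := (norm_nonneg _).trans hw
  have hlag := h.norm_lag_le hX hdiam hη₀ hη (t + 1)
  push_cast at hlag
  calc ‖z (t + 1) - z t‖
      ≤ η * ‖w t - z t‖ + 1 / (((t : ℝ) + 1) * (t + 2)) * ‖lag x z (t + 1)‖ := by
        rw [h.z_succ_sub_z]
        refine (norm_add_le _ _).trans_eq ?_
        rw [norm_smul, norm_smul, Real.norm_of_nonneg hη₀, Real.norm_of_nonneg (by positivity)]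
    _ ≤ η * D + 1 / (((t : ℝ) + 1) * (t + 2)) * ((t + 1) * (η * D / 2)) := by gcongr
    _ = η * D + 1 / (t + 2) * (η * D / 2) := by field_simp
    _ ≤ η * D + 1 / (0 + 2) * (η * D / 2) := by gcongr; positivity
    _ = 5 / 4 * (η * D) := by ring

theorem inner_lag_succ_le (h : IsAccFrankWolfe X η v w x y z) (hX : Convex ℝ X)
    (hdiam : ∀ p ∈ X, ∀ q ∈ X, ‖p - q‖ ≤ D) (hη₀ : 0 ≤ η) (hη : η ≤ 2 / 3) {g : E → E}
    {K : ℝ≥0} (hK : LipschitzWith K g) (hv : ∀ t, ‖v t - g (z t)‖ ≤ δ) (t : ℕ) :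
    ⟪g (z t), lag x z (t + 1)⟫
      ≤ (t + 1) * (η * (D * δ) / 2 + 5 / 16 * K * (η * D) ^ 2 * t) := by
  have hδ : 0 ≤ δ := (norm_nonneg _).trans (hv 0)
  have hD : 0 ≤ D := (norm_nonneg _).trans (h.norm_w_sub_z_le hX hdiam hη₀ hη 0)
  have hw (t : ℕ) : η / (t + 2) * ⟪g (z t), w t - z t⟫ ≤ η * (D * δ) / 2 :=
    calc η / (t + 2) * ⟪g (z t), w t - z t⟫ ≤ η / (t + 2) * (D * δ) := by
          gcongr; exact h.inner_w_sub_le hdiam (hv t) (h.mem hX hη₀ hη t).2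
      _ ≤ η / (0 + 2) * (D * δ) := by gcongr; positivity
      _ = η * (D * δ) / 2 := by ring
  induction t with
  | zero => simpa [h.lag_succ, h.lag_zero, real_inner_smul_right] using hw 0
  | succ t ih =>
    have hγ₀ := auxStep_nonneg hη₀ (t + 1)
    have hγ₁ : 0 ≤ 1 - auxStep η (t + 1) := sub_nonneg.2 (auxStep_le_one hη₀ hη (t + 1))
    have hdrift : ⟪g (z (t + 1)) - g (z t), lag x z (t + 1)⟫
        ≤ K * (5 / 4 * (η * D)) * ((t + 1 : ℕ) * (η * D / 2)) := by
      refine (real_inner_le_norm _ _).trans ?_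
      gcongr
      · exact (hK.norm_sub_le _ _).trans <| by
          gcongr; exact h.norm_z_succ_sub_z_le hX hdiam hη₀ hη t
      · exact h.norm_lag_le hX hdiam hη₀ hη (t + 1)
    have hprev : ⟪g (z (t + 1)), lag x z (t + 1)⟫
        ≤ (t + 1) * (η * (D * δ) / 2 + 5 / 16 * K * (η * D) ^ 2 * (t + 2)) := by
      rw [inner_sub_left] at hdrift
      push_cast at hdrift
      linarith
    calc ⟪g (z (t + 1)), lag x z (t + 1 + 1)⟫
        = (1 - auxStep η (t + 1)) * ⟪g (z (t + 1)), lag x z (t + 1)⟫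
          + η / ((t + 1 : ℕ) + 2) * ⟪g (z (t + 1)), w (t + 1) - z (t + 1)⟫ := by
          rw [h.lag_succ, inner_add_right, real_inner_smul_right, real_inner_smul_right]
      _ ≤ (1 - auxStep η (t + 1))
            * ((t + 1) * (η * (D * δ) / 2 + 5 / 16 * K * (η * D) ^ 2 * (t + 2)))
          + η * (D * δ) / 2 := by gcongr; exact hw (t + 1)
      _ ≤ 1 * ((t + 1) * (η * (D * δ) / 2 + 5 / 16 * K * (η * D) ^ 2 * (t + 2)))
          + η * (D * δ) / 2 := by gcongr; linarith
      _ = ((t + 1 : ℕ) + 1) * (η * (D * δ) / 2 + 5 / 16 * K * (η * D) ^ 2 * (t + 1 : ℕ)) := by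
          push_cast; ring

theorem inner_z_succ_sub_z_le (h : IsAccFrankWolfe X η v w x y z) (hX : Convex ℝ X)
    (hdiam : ∀ p ∈ X, ∀ q ∈ X, ‖p - q‖ ≤ D) (hη₀ : 0 ≤ η) (hη : η ≤ 2 / 3) {g : E → E}
    {K : ℝ≥0} (hK : LipschitzWith K g) (hv : ∀ t, ‖v t - g (z t)‖ ≤ δ) (t : ℕ) :
    ⟪g (z t), z (t + 1) - z t⟫
      ≤ η * ⟪g (z t), w t - z t⟫ + (η * (D * δ) / 4 + 5 / 16 * K * (η * D) ^ 2) := by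
  have hδ : 0 ≤ δ := (norm_nonneg _).trans (hv 0)
  have hD : 0 ≤ D := (norm_nonneg _).trans (h.norm_w_sub_z_le hX hdiam hη₀ hη 0)
  rw [h.z_succ_sub_z, inner_add_right, real_inner_smul_right, real_inner_smul_right]
  gcongr
  calc 1 / (((t : ℝ) + 1) * (t + 2)) * ⟪g (z t), lag x z (t + 1)⟫
      ≤ 1 / (((t : ℝ) + 1) * (t + 2))
        * ((t + 1) * (η * (D * δ) / 2 + 5 / 16 * K * (η * D) ^ 2 * t)) := by
        gcongr; exact h.inner_lag_succ_le hX hdiam hη₀ hη hK hv t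
    _ = 1 / (t + 2) * (η * (D * δ) / 2) + 5 / 16 * K * (η * D) ^ 2 * (t / (t + 2)) := by
        field_simp
    _ ≤ 1 / (0 + 2) * (η * (D * δ) / 2) + 5 / 16 * K * (η * D) ^ 2 * 1 := by
        gcongr
        · positivity
        · exact div_le_one_of_le₀ (by linarith) (by positivity)
    _ = η * (D * δ) / 4 + 5 / 16 * K * (η * D) ^ 2 := by ring

variable [CompleteSpace E] {f : E → ℝ} {K : ℝ≥0}

theorem mul_dualityGap_le (h : IsAccFrankWolfe X η v w x y z) (hX : Convex ℝ X)
    (hdiam : ∀ p ∈ X, ∀ q ∈ X, ‖p - q‖ ≤ D) (hη₀ : 0 ≤ η) (hη : η ≤ 2 / 3)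
    (hf : Differentiable ℝ f) (hK : LipschitzWith K (∇ f))
    (hv : ∀ t, ‖v t - ∇ f (z t)‖ ≤ δ) (t : ℕ) :
    η * dualityGap f X (z t)
      ≤ f (z t) - f (z (t + 1)) + 5 / 4 * (η * (D * δ) + K * (η * D) ^ 2) := by
  have hgap : dualityGap f X (z t) ≤ D * δ - ⟪∇ f (z t), w t - z t⟫ := by
    refine csSup_le (Set.Nonempty.image _ ⟨_, h.z_zero_mem⟩) ?_
    rintro _ ⟨p, hp, rfl⟩
    have hw := h.inner_w_sub_le hdiam (hv t) hp
    calc ⟪p - z t, -∇ f (z t)⟫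
        = ⟪∇ f (z t), w t - p⟫ - ⟪∇ f (z t), w t - z t⟫ := by
          rw [real_inner_comm, inner_neg_left, ← inner_neg_right, ← inner_sub_right]
          congr 1
          abel
      _ ≤ D * δ - ⟪∇ f (z t), w t - z t⟫ := by gcongr
  have hdescent := (abs_le.1 (abs_sub_sub_inner_gradient_le hf hK (z t) (z (t + 1)))).2
  have hquad : K / 2 * ‖z (t + 1) - z t‖ ^ 2 ≤ K / 2 * (5 / 4 * (η * D)) ^ 2 := by
    gcongr; exact h.norm_z_succ_sub_z_le hX hdiam hη₀ hη t
  have hlin := h.inner_z_succ_sub_z_le hX hdiam hη₀ hη hK hv t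
  have hslack : 0 ≤ K * (η * D) ^ 2 := by positivity
  linarith [mul_le_mul_of_nonneg_left hgap hη₀]

theorem mul_sum_dualityGap_le (h : IsAccFrankWolfe X η v w x y z) (hX : Convex ℝ X)
    (hdiam : ∀ p ∈ X, ∀ q ∈ X, ‖p - q‖ ≤ D) (hη₀ : 0 ≤ η) (hη : η ≤ 2 / 3)
    (hf : Differentiable ℝ f) (hK : LipschitzWith K (∇ f))
    (hv : ∀ t, ‖v t - ∇ f (z t)‖ ≤ δ) {m T : ℕ} (hmT : m ≤ T) :
    η * ∑ t ∈ Finset.Ico m T, dualityGap f X (z t)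
      ≤ f (z m) - f (z T) + (T - m) * (5 / 4 * (η * (D * δ) + K * (η * D) ^ 2)) := by
  have htel := Finset.sum_Ico_sub (fun t => -f (z t)) hmT
  simp only [neg_sub_neg] at htel
  calc η * ∑ t ∈ Finset.Ico m T, dualityGap f X (z t)
      = ∑ t ∈ Finset.Ico m T, η * dualityGap f X (z t) := Finset.mul_sum _ _ _
    _ ≤ ∑ t ∈ Finset.Ico m T,
          (f (z t) - f (z (t + 1)) + 5 / 4 * (η * (D * δ) + K * (η * D) ^ 2)) :=
        Finset.sum_le_sum fun t _ => h.mul_dualityGap_le hX hdiam hη₀ hη hf hK hv t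
    _ = f (z m) - f (z T) + (T - m) * (5 / 4 * (η * (D * δ) + K * (η * D) ^ 2)) := by
        rw [Finset.sum_add_distrib, htel, Finset.sum_const, Nat.card_Ico, nsmul_eq_mul,
          Nat.cast_sub hmT]

theorem average_dualityGap_le (h : IsAccFrankWolfe X η v w x y z) (hX : Convex ℝ X)
    (hdiam : ∀ p ∈ X, ∀ q ∈ X, ‖p - q‖ ≤ D) (hf : Differentiable ℝ f)
    (hK : LipschitzWith K (∇ f)) {T : ℕ} (hT : 3 ≤ T) (hη : η = 1 / √T) {ε : ℝ}
    (hv : ∀ t, ‖v t - ∇ f (z t)‖ ≤ ε * η) {Δ : ℝ} (hΔ : ∀ p ∈ X, ∀ q ∈ X, f p - f q ≤ Δ) :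
    (1 / (T : ℝ)) * ∑ t ∈ Finset.Ico 1 T, dualityGap f X (z t)
      ≤ (Δ + 5 / 4 * (K * D ^ 2 + D * ε)) / √T := by
  have hT' : (3 : ℝ) ≤ T := by exact_mod_cast hT
  have hη₀ : 0 ≤ η := by rw [hη]; positivity
  have hη₁ : η ≤ 2 / 3 := hη ▸ one_div_sqrt_le_two_thirds (by linarith)
  have hηT : T * η ^ 2 = 1 := by
    rw [hη, div_pow, Real.sq_sqrt (by positivity)]; field_simp
  have hz (t : ℕ) : z t ∈ X := (h.mem hX hη₀ hη₁ t).2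
  have hslack : 0 ≤ η * (D * (ε * η)) + K * (η * D) ^ 2 := by
    have hD : 0 ≤ D := (norm_nonneg _).trans (hdiam _ (hz 0) _ (hz 0))
    have hε : 0 ≤ ε * η := (norm_nonneg _).trans (hv 0)
    positivity
  have hbound : η * ∑ t ∈ Finset.Ico 1 T, dualityGap f X (z t)
      ≤ Δ + 5 / 4 * (K * D ^ 2 + D * ε) := by
    have hsum := h.mul_sum_dualityGap_le hX hdiam hη₀ hη₁ hf hK hv (m := 1) (T := T) (by omega)
    calc η * ∑ t ∈ Finset.Ico 1 T, dualityGap f X (z t)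
        ≤ Δ + T * (5 / 4 * (η * (D * (ε * η)) + K * (η * D) ^ 2)) := by
          push_cast at hsum
          linarith [hΔ _ (hz 1) _ (hz T)]
      _ = Δ + 5 / 4 * (K * D ^ 2 + D * ε) := by
          linear_combination 5 / 4 * (K * D ^ 2 + D * ε) * hηT
  calc (1 / (T : ℝ)) * ∑ t ∈ Finset.Ico 1 T, dualityGap f X (z t)
      = η * (η * ∑ t ∈ Finset.Ico 1 T, dualityGap f X (z t)) := by
        rw [← eq_one_div_of_mul_eq_one_right hηT]; ring
    _ ≤ η * (Δ + 5 / 4 * (K * D ^ 2 + D * ε)) := by gcongr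
    _ = (Δ + 5 / 4 * (K * D ^ 2 + D * ε)) / √T := by rw [hη]; ring

end IsAccFrankWolfe

theorem sub_le_of_sub_sInf_image_le {α : Type*} {f : α → ℝ} {X : Set α} {Δ : ℝ}
    (hbdd : BddBelow (f '' X)) (hΔ : ∀ p ∈ X, f p - sInf (f '' X) ≤ Δ) :
    ∀ p ∈ X, ∀ q ∈ X, f p - f q ≤ Δ := fun p hp q hq => by
  linarith [hΔ p hp, csInf_le hbdd ⟨q, hq, rfl⟩]

theorem bddBelow_image_of_norm_sub_le {E : Type*} [SeminormedAddCommGroup E] [ProperSpace E]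
    {f : E → ℝ} (hf : Continuous f) {X : Set E} {D : ℝ}
    (hdiam : ∀ p ∈ X, ∀ q ∈ X, ‖p - q‖ ≤ D) : BddBelow (f '' X) := by
  have hX : Bornology.IsBounded X :=
    Metric.isBounded_iff.2 ⟨D, fun p hp q hq => (dist_eq_norm p q).trans_le (hdiam p hp q hq)⟩
  exact (hX.isCompact_closure.image hf).bddBelow.mono (Set.image_mono subset_closure)

theorem acc_zo_fw_convergence_general {ι κ : Type*} [Fintype ι] [DecidableEq ι] [Fintype κ]
    [Nonempty κ] {X : Set (EuclideanSpace ℝ ι)} (hX : Convex ℝ X) {D : ℝ}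
    (hdiam : ∀ p ∈ X, ∀ q ∈ X, ‖p - q‖ ≤ D) {fs : κ → EuclideanSpace ℝ ι → ℝ} {K : NNReal}
    (hfs : ∀ i, Differentiable ℝ (fs i)) (hK : ∀ i, LipschitzWith K (gradient (fs i)))
    {f : EuclideanSpace ℝ ι → ℝ} (hf : f = fun u => (1 / (Fintype.card κ : ℝ)) * ∑ i, fs i u)
    {T : ℕ} (hT : 3 ≤ T) {η μ : ℝ} (hη : η = 1 / √T) (hμ : 0 < μ)
    (hμη : μ * √(Fintype.card ι) ≤ η) {v w x y z : ℕ → EuclideanSpace ℝ ι}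
    (hv : ∀ t, v t = (1 / (Fintype.card κ : ℝ)) • ∑ i, coordGradient μ (fs i) (z t))
    (h : IsAccFrankWolfe X η v w x y z) {Δ : ℝ} (hΔ : ∀ p ∈ X, f p - sInf (f '' X) ≤ Δ) :
    (1 / (T : ℝ)) * ∑ t ∈ Finset.Ico 1 T, dualityGap f X (z t)
      ≤ (Δ + 5 / 4 * (K * D ^ 2 + D * (K / 2))) / √T := by
  have hfdiff : Differentiable ℝ f := by rw [hf]; fun_prop
  have hfK : LipschitzWith K (gradient f) := hf ▸ lipschitzWith_gradient_average hfs hK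
  have hsurr (t : ℕ) : ‖v t - gradient f (z t)‖ ≤ K / 2 * η := by
    rw [hv, hf]
    refine (norm_average_coordGradient_sub_gradient_le hfs hK hμ (z t)).trans ?_
    gcongr
  have hbdd := bddBelow_image_of_norm_sub_le hfdiff.continuous hdiam
  exact h.average_dualityGap_le hX hdiam hfdiff hfK hT hη hsurr
    (sub_le_of_sub_sInf_image_le hbdd hΔ)

theorem rpow_neg_half_eq_one_div_sqrt {a : ℝ} (ha : 0 ≤ a) : a ^ (-(1 / 2 : ℝ)) = 1 / √a := by
  rw [Real.rpow_neg ha, ← Real.sqrt_eq_rpow, one_div]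

/-- Convergence of the deterministic accelerated zeroth-order Frank–Wolfe method
(Acc-ZO-FW): with `η = T^{-1/2}`, `μ = d^{-1/2} T^{-1/2}`, and gradient surrogates
`v t = (1/n) ∑ i, ∇̂_coo f_i (z t)`, one has
`(1/T) ∑_{t=1}^{T-1} G(z t) ≤ (Δ + 4LD² + 2DL)/√T + D L ln T / T^{3/2}`. -/
theorem acc_zo_fw_convergence
    (d : ℕ) (hd : 1 ≤ d)
    (X : Set (EuclideanSpace ℝ (Fin d))) (hXne : X.Nonempty)
    (hXcomp : IsCompact X) (hXconv : Convex ℝ X)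
    (D : ℝ) (hD : 0 < D)
    (hdiam : ∀ u ∈ X, ∀ v ∈ X, ‖u - v‖ ≤ D)
    (n : ℕ) (hn : 1 ≤ n)
    (fs : Fin n → EuclideanSpace ℝ (Fin d) → ℝ)
    (L : ℝ) (hL : 0 < L)
    (hdiff : ∀ i, Differentiable ℝ (fs i))
    (hLip : ∀ i, ∀ u v', ‖gradient (fs i) u - gradient (fs i) v'‖ ≤ L * ‖u - v'‖)
    (f : EuclideanSpace ℝ (Fin d) → ℝ)
    (hf : f = fun x => (1 / (n : ℝ)) * ∑ i, fs i x)
    (T : ℕ) (hT : 3 ≤ T)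
    (η μ : ℝ)
    (hηdef : η = (T : ℝ) ^ (-(1 / 2 : ℝ)))
    (hμdef : μ = (d : ℝ) ^ (-(1 / 2 : ℝ)) * (T : ℝ) ^ (-(1 / 2 : ℝ)))
    (x y z w v : ℕ → EuclideanSpace ℝ (Fin d))
    (hx0 : x 0 = z 0) (hy0 : y 0 = z 0) (hz0 : z 0 ∈ X)
    (hv : ∀ t : ℕ, v t = (1 / (n : ℝ)) • ∑ i, ∑ j : Fin d,
      ((fs i (z t + μ • EuclideanSpace.single j 1)
          - fs i (z t - μ • EuclideanSpace.single j 1)) / (2 * μ)) •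
        EuclideanSpace.single j 1)
    (hwX : ∀ t, w t ∈ X)
    (hwopt : ∀ t, ∀ w' ∈ X, ⟪w', -(v t)⟫ ≤ ⟪w t, -(v t)⟫)
    (hxrec : ∀ t : ℕ, x (t + 1)
      = x t + ((1 + 1 / (((t : ℝ) + 1) * ((t : ℝ) + 2))) * η) • (w t - x t))
    (hyrec : ∀ t : ℕ, y (t + 1) = z t + η • (w t - z t))
    (hzrec : ∀ t : ℕ, z (t + 1)
      = (1 - 1 / ((t : ℝ) + 2)) • y (t + 1) + (1 / ((t : ℝ) + 2)) • x (t + 1))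
    (Δ : ℝ) (hΔ0 : 0 ≤ Δ)
    (hΔ : ∀ x' ∈ X, f x' - sInf (f '' X) ≤ Δ) :
    (1 / (T : ℝ)) * ∑ t ∈ Finset.Ico 1 T, fwGap f X (z t)
      ≤ (Δ + 4 * L * D ^ 2 + 2 * D * L) / Real.sqrt T
        + D * L * Real.log T / (T : ℝ) ^ ((3 : ℝ) / 2) := by
  lift L to NNReal using hL.le
  have : Nonempty (Fin n) := ⟨⟨0, hn⟩⟩
  have hη : η = 1 / √T := hηdef.trans (rpow_neg_half_eq_one_div_sqrt T.cast_nonneg)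
  have hμη : μ * √d = η := by
    rw [hμdef, ← hηdef, rpow_neg_half_eq_one_div_sqrt d.cast_nonneg]; field_simp
  have hμ : 0 < μ := by rw [hμdef]; positivity
  calc (1 / (T : ℝ)) * ∑ t ∈ Finset.Ico 1 T, fwGap f X (z t)
      ≤ (Δ + 5 / 4 * (L * D ^ 2 + D * (L / 2))) / √T :=
        acc_zo_fw_convergence_general hXconv hdiam hdiff
          (fun i => lipschitzWith_iff_norm_sub_le.2 (hLip i)) (by rwa [Fintype.card_fin])
          hT hη hμ (by rw [Fintype.card_fin, hμη]) (by rwa [Fintype.card_fin])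
          ⟨hx0, hz0, hwX, hwopt, hxrec, hyrec, hzrec⟩ hΔ
    _ ≤ (Δ + 4 * L * D ^ 2 + 2 * D * L) / √T := by
        gcongr ?_ / _
        nlinarith [mul_pos hD hL, mul_pos hL (pow_pos hD 2)]
    _ ≤ _ := le_add_of_nonneg_right (by positivity)
end

section
/- Unbiasedness of the uniform smoothing gradient estimator for the smoothed function: f_β is differentiable at every x ∈ ℝ^d, and its gradient satisfies ∇f_β(x) = E_{u ~ Unif(S)}[(d/β)(f(x + βu) − f(x)) u]. -/
open MeasureTheory

/-- The uniform probability measure (normalized Lebesgue measure) on the closed unit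
ball of `ℝ^d`. -/
noncomputable def uniformUnitBall (d : ℕ) : Measure (EuclideanSpace ℝ (Fin d)) :=
  (volume (Metric.closedBall (0 : EuclideanSpace ℝ (Fin d)) 1))⁻¹ •
    volume.restrict (Metric.closedBall (0 : EuclideanSpace ℝ (Fin d)) 1)

/-- The uniform probability measure (normalized surface measure) on the unit sphere
of `ℝ^d`. -/
noncomputable def uniformUnitSphere (d : ℕ) :
    Measure (Metric.sphere (0 : EuclideanSpace ℝ (Fin d)) 1) :=
  ((volume : Measure (EuclideanSpace ℝ (Fin d))).toSphere Set.univ)⁻¹ •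
    (volume : Measure (EuclideanSpace ℝ (Fin d))).toSphere

/-!
Writing `h z = f (β z)`, the smoothed function is a rescaling of `y ↦ ∫_{‖w‖ ≤ 1} h (y + w)`, whose
derivative is the flux of `h` through the unit sphere around `y`. For merely continuous `h` this is
seen by replacing the indicator of the ball by a smooth radial cutoff `p (‖w‖ ^ 2)`: the derivative
then falls on the cutoff, and in polar coordinates it becomes an average, with density
`-d/dr p (r ^ 2)`, of the fluxes through the spheres of radius `r`. As the cutoff sharpens, this
density concentrates at `r = 1`, so the derivatives converge locally uniformly to the flux through
the unit sphere. Since the sphere has `d` times the mass of the ball, normalizing both measures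
yields the factor `d / β`, and applying the result to `f - f x` introduces the baseline `f x`.
-/

open Filter Metric Module Set Topology

section PolarCoordinates

variable {E F : Type*} [NormedAddCommGroup E] [NormedSpace ℝ E] [FiniteDimensional ℝ E]
  [Nontrivial E] [MeasurableSpace E] [BorelSpace E] [NormedAddCommGroup F] [NormedSpace ℝ F]

theorem integral_volumeIoiPow (n : ℕ) (g : ℝ → F) :
    ∫ r : Ioi (0 : ℝ), g r ∂Measure.volumeIoiPow n = ∫ r in Ioi (0 : ℝ), r ^ n • g r := by
  have hmeas : Measurable fun r : Ioi (0 : ℝ) ↦ ENNReal.ofReal (r.1 ^ n) := by fun_prop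
  rw [Measure.volumeIoiPow, integral_withDensity_eq_integral_toReal_smul hmeas (by simp),
    integral_subtype_comap measurableSet_Ioi fun r ↦ (ENNReal.ofReal (r ^ n)).toReal • g r]
  refine setIntegral_congr_fun measurableSet_Ioi fun r hr ↦ ?_
  simp only [ENNReal.toReal_ofReal (pow_nonneg (le_of_lt hr) n)]

theorem integral_eq_integral_Ioi_toSphere (μ : Measure E) [μ.IsAddHaarMeasure] {g : E → F}
    (hg : Integrable g μ) :
    ∫ w, g w ∂μ = ∫ r in Ioi (0 : ℝ),
      r ^ (finrank ℝ E - 1) • ∫ u : sphere (0 : E) 1, g (r • (u : E)) ∂μ.toSphere := by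
  set G : sphere (0 : E) 1 × Ioi (0 : ℝ) → F := fun p ↦ g ((p.2 : ℝ) • (p.1 : E))
  have hpolar := μ.measurePreserving_homeomorphUnitSphereProd
  have hemb := (homeomorphUnitSphereProd E).measurableEmbedding
  have hG : G ∘ homeomorphUnitSphereProd E = g ∘ Subtype.val := by
    funext w
    have := congrArg Subtype.val ((homeomorphUnitSphereProd E).symm_apply_apply w)
    rw [homeomorphUnitSphereProd_symm_apply_coe] at this
    simp only [G, Function.comp_apply, this]
  have hG_int : Integrable G (μ.toSphere.prod (.volumeIoiPow (finrank ℝ E - 1))) := by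
    rw [← hpolar.integrable_comp_emb hemb, hG,
      ← integrableOn_iff_comap_subtypeVal (measurableSet_singleton _).compl]
    exact hg.integrableOn
  calc ∫ w, g w ∂μ
      = ∫ w : ({0}ᶜ : Set E), g w ∂μ.comap (↑) := by
        rw [integral_subtype_comap (measurableSet_singleton _).compl g, restrict_compl_singleton]
    _ = ∫ p, G p ∂μ.toSphere.prod (.volumeIoiPow (finrank ℝ E - 1)) := by
        rw [← hpolar.integral_comp hemb]
        exact congrArg (integral _) hG.symm
    _ = _ := by
        rw [integral_prod_symm _ hG_int,
          ← integral_volumeIoiPow _ fun r ↦ ∫ u : sphere (0 : E) 1, g (r • (u : E)) ∂μ.toSphere]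

end PolarCoordinates

section Cutoff

/-- A `C^1` cutoff on the line, equal to `1` on `(-∞, 1]` and to `0` on `[1 + ε, ∞)` when `0 < ε`.
Composed with `‖·‖ ^ 2`, it approximates the indicator of the closed unit ball as `ε → 0⁺`. -/
noncomputable def unitCutoff (ε s : ℝ) : ℝ :=
  Real.smoothTransition (1 + (1 - s) / ε)

variable {ε : ℝ}

theorem contDiff_unitCutoff (ε : ℝ) : ContDiff ℝ 1 (unitCutoff ε) :=
  Real.smoothTransition.contDiff.comp (by fun_prop)

theorem antitone_unitCutoff (hε : 0 < ε) : Antitone (unitCutoff ε) := fun s t hst ↦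
  Real.smoothTransition.monotone (by gcongr)

theorem unitCutoff_of_le_one (hε : 0 < ε) {s : ℝ} (hs : s ≤ 1) : unitCutoff ε s = 1 :=
  Real.smoothTransition.one_of_one_le <| le_add_of_nonneg_right <|
    div_nonneg (sub_nonneg.2 hs) hε.le

theorem unitCutoff_of_one_add_le (hε : 0 < ε) {s : ℝ} (hs : 1 + ε ≤ s) : unitCutoff ε s = 0 := by
  have : (1 - s) / ε ≤ -1 := by rw [div_le_iff₀ hε]; linarith
  exact Real.smoothTransition.zero_of_nonpos (by linarith)

theorem unitCutoff_eventuallyEq_zero (hε : 0 < ε) : unitCutoff ε =ᶠ[atTop] 0 := by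
  filter_upwards [eventually_ge_atTop (1 + ε)] with s hs using unitCutoff_of_one_add_le hε hs

theorem norm_unitCutoff_le_one (ε s : ℝ) : ‖unitCutoff ε s‖ ≤ 1 := by
  rw [unitCutoff, Real.norm_of_nonneg (Real.smoothTransition.nonneg _)]
  exact Real.smoothTransition.le_one _

theorem tendsto_unitCutoff (s : ℝ) :
    Tendsto (unitCutoff · s) (𝓝[>] 0) (𝓝 ((Iic 1).indicator 1 s)) := by
  refine tendsto_const_nhds.congr' ?_
  rcases le_or_gt s 1 with hs | hs
  · filter_upwards [self_mem_nhdsWithin] with ε hε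
    simp [unitCutoff_of_le_one hε hs, hs]
  · filter_upwards [Ioc_mem_nhdsGT (sub_pos.2 hs)] with ε hε
    simp [unitCutoff_of_one_add_le hε.1 (by linarith [hε.2] : 1 + ε ≤ s), hs]

theorem hasDerivAt_comp_sq {p : ℝ → ℝ} (hp : Differentiable ℝ p) (r : ℝ) :
    HasDerivAt (fun s ↦ p (s ^ 2)) (deriv p (r ^ 2) * (2 * r)) r := by
  simpa [Function.comp_def] using (hp (r ^ 2)).hasDerivAt.comp r (hasDerivAt_pow 2 r)

end Cutoff

section ShellKernel

variable {ε : ℝ}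

/-- The derivative in `r > 0` of `-unitCutoff ε (r ^ 2)`, extended by zero to `r ≤ 0`. It is a
probability density on `[1, 1 + ε]`, the weight with which the spheres of radius `r` contribute to
the derivative of an average against `unitCutoff ε (‖·‖ ^ 2)`. -/
noncomputable def shellKernel (ε : ℝ) : ℝ → ℝ :=
  (Ioi 0).indicator fun r ↦ -deriv (fun s ↦ unitCutoff ε (s ^ 2)) r

theorem shellKernel_nonneg (hε : 0 < ε) (r : ℝ) : 0 ≤ shellKernel ε r := by
  refine indicator_nonneg (fun r (hr : 0 < r) ↦ neg_nonneg.2 ?_) r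
  rw [(hasDerivAt_comp_sq ((contDiff_unitCutoff ε).differentiable one_ne_zero) r).deriv]
  exact mul_nonpos_of_nonpos_of_nonneg (antitone_unitCutoff hε).deriv_nonpos (by positivity)

theorem support_shellKernel_subset (hε : 0 < ε) :
    Function.support (shellKernel ε) ⊆ Icc 1 (1 + ε) := by
  refine fun r hr ↦ by_contra fun hmem ↦ hr (indicator_apply_eq_zero.2 fun hr_pos ↦ ?_)
  rcases lt_or_ge r 1 with hr1 | hr1
  · have : (fun s ↦ unitCutoff ε (s ^ 2)) =ᶠ[𝓝 r] fun _ ↦ 1 := by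
      filter_upwards [Ioo_mem_nhds hr_pos hr1] with s hs
      exact unitCutoff_of_le_one hε (pow_le_one₀ hs.1.le hs.2.le)
    simp [this.deriv_eq]
  · have : (fun s ↦ unitCutoff ε (s ^ 2)) =ᶠ[𝓝 r] fun _ ↦ 0 := by
      filter_upwards [Ioi_mem_nhds (not_le.1 fun hr2 ↦ hmem ⟨hr1, hr2⟩)] with s hs
      exact unitCutoff_of_one_add_le hε (by nlinarith [mem_Ioi.1 hs])
    simp [this.deriv_eq]

theorem integral_shellKernel (hε : 0 < ε) : ∫ r, shellKernel ε r = 1 := by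
  have hderiv (r : ℝ) : HasDerivAt (fun s ↦ -unitCutoff ε (s ^ 2))
      (-deriv (fun s ↦ unitCutoff ε (s ^ 2)) r) r :=
    (hasDerivAt_comp_sq ((contDiff_unitCutoff ε).differentiable one_ne_zero)
      r).differentiableAt.hasDerivAt.neg
  have hnonneg (r : ℝ) (hr : r ∈ Ioi 0) : 0 ≤ -deriv (fun s ↦ unitCutoff ε (s ^ 2)) r := by
    simpa only [shellKernel, indicator_of_mem hr] using shellKernel_nonneg hε r
  have hlim : Tendsto (fun r ↦ -unitCutoff ε (r ^ 2)) atTop (𝓝 0) := by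
    refine tendsto_const_nhds.congr' ?_
    filter_upwards [(tendsto_pow_atTop two_ne_zero).eventually (unitCutoff_eventuallyEq_zero hε)]
      with r hr
    simp [hr]
  rw [shellKernel, integral_indicator measurableSet_Ioi,
    integral_Ioi_of_hasDerivAt_of_nonneg' (fun r _ ↦ hderiv r) hnonneg hlim]
  simp [unitCutoff_of_le_one hε]

variable {F : Type*} [NormedAddCommGroup F] [NormedSpace ℝ F]

theorem integral_shellKernel_smul (ε : ℝ) (g : ℝ → F) :
    ∫ r, shellKernel ε r • g r =
      ∫ r in Ioi (0 : ℝ), -deriv (fun s ↦ unitCutoff ε (s ^ 2)) r • g r := by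
  rw [← integral_indicator measurableSet_Ioi, indicator_smul_left]
  rfl

theorem tendsto_integral_shellKernel_smul [CompleteSpace F] {X : Type*} [TopologicalSpace X]
    {g : X → ℝ → F} (hg : Continuous (Function.uncurry g)) (x : X) :
    Tendsto (fun q : ℝ × X ↦ ∫ r, shellKernel q.1 r • g q.2 r) (𝓝[>] 0 ×ˢ 𝓝 x)
      (𝓝 (g x 1)) := by
  have hpos : ∀ᶠ q : ℝ × X in 𝓝[>] 0 ×ˢ 𝓝 x, 0 < q.1 :=
    tendsto_fst.eventually self_mem_nhdsWithin
  have hsupp : Tendsto (fun q : ℝ × X ↦ Function.support fun t ↦ shellKernel q.1 (1 - t))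
      (𝓝[>] 0 ×ˢ 𝓝 x) (𝓝 0).smallSets := by
    refine tendsto_smallSets_iff.2 fun U hU ↦ ?_
    obtain ⟨δ, hδ, hδU⟩ := nhds_basis_closedBall.mem_iff.1 hU
    filter_upwards [tendsto_fst.eventually (Ioc_mem_nhdsGT hδ)] with q ⟨hq, hqδ⟩ t ht
    obtain ⟨hle, hge⟩ := support_shellKernel_subset hq ht
    refine hδU ?_
    rw [Real.closedBall_eq_Icc]
    exact ⟨by linarith, by linarith⟩
  have hg_lim : Tendsto (fun p : (ℝ × X) × ℝ ↦ g p.1.2 p.2) ((𝓝[>] 0 ×ˢ 𝓝 x) ×ˢ 𝓝 1)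
      (𝓝 (g x 1)) :=
    (hg.tendsto (x, 1)).comp ((tendsto_snd.comp tendsto_fst).prodMk_nhds tendsto_snd)
  refine (convolution_tendsto_right (μ := volume) (φ := fun q t ↦ shellKernel q.1 (1 - t))
    (g := fun (q : ℝ × X) r ↦ g q.2 r)
    (hpos.mono fun q hq t ↦ shellKernel_nonneg hq (1 - t)) (hpos.mono fun q hq ↦ ?_) hsupp
    (.of_forall fun q ↦ (hg.comp (.prodMk_right q.2)).aestronglyMeasurable) hg_lim
    tendsto_const_nhds).congr fun q ↦ ?_
  · rw [integral_sub_left_eq_self (shellKernel q.1), integral_shellKernel hq]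
  · simp only [convolution_lsmul_swap, sub_sub_cancel]

end ShellKernel

section Kernel

variable {E F : Type*} [NormedAddCommGroup E] [NormedSpace ℝ E] [FiniteDimensional ℝ E]
  [MeasurableSpace E] [BorelSpace E] {μ : Measure E} [μ.IsAddHaarMeasure]
  [NormedAddCommGroup F] [NormedSpace ℝ F]

theorem hasFDerivAt_integral_smul_comp_add {φ : E → ℝ} {f : E → F} (hφ : ContDiff ℝ 1 φ)
    (hφ_supp : HasCompactSupport φ) (hf : LocallyIntegrable f μ) (x : E) :
    HasFDerivAt (fun y ↦ ∫ w, φ w • f (y + w) ∂μ)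
      (-∫ w, (fderiv ℝ φ w).smulRight (f (x + w)) ∂μ) x := by
  set ψ : E → ℝ := fun w ↦ φ (-w)
  have hψ_supp : HasCompactSupport ψ := hφ_supp.comp_homeomorph (Homeomorph.neg E)
  have hψ_fderiv (w : E) : fderiv ℝ ψ w = -fderiv ℝ φ (-w) := by
    refine ((hφ.differentiable one_ne_zero (-w)).hasFDerivAt.comp w
      (hasFDerivAt_id w).neg).fderiv.trans ?_
    ext v
    simp
  convert! hψ_supp.hasFDerivAt_convolution_left (ContinuousLinearMap.lsmul ℝ ℝ)
    (hφ.comp contDiff_neg) hf x using 1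
  · funext y
    rw [convolution_def, ← integral_neg_eq_self]
    simp [ψ, sub_eq_add_neg]
  · rw [convolution_def, ← integral_neg_eq_self, ← integral_neg]
    congr 1 with w v
    simp [hψ_fderiv, sub_eq_add_neg]

end Kernel

section NormSq

variable {E : Type*} [NormedAddCommGroup E]

theorem hasCompactSupport_comp_norm_sq [ProperSpace E] {p : ℝ → ℝ} (hp : p =ᶠ[atTop] 0) :
    HasCompactSupport fun w : E ↦ p (‖w‖ ^ 2) := by
  rw [hasCompactSupport_iff_eventuallyEq, coclosedCompact_eq_cocompact]
  exact ((tendsto_pow_atTop two_ne_zero).comp tendsto_norm_cocompact_atTop).eventually hp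

theorem fderiv_comp_norm_sq_smul [InnerProductSpace ℝ E] {p : ℝ → ℝ} (hp : Differentiable ℝ p)
    (r : ℝ) {u : E} (hu : ‖u‖ = 1) :
    fderiv ℝ (fun w ↦ p (‖w‖ ^ 2)) (r • u) = deriv (fun s ↦ p (s ^ 2)) r • innerSL ℝ u := by
  have hsq : ‖r • u‖ ^ 2 = r ^ 2 := by rw [norm_smul, hu, mul_one, Real.norm_eq_abs, sq_abs]
  have hderiv := (hp (‖r • u‖ ^ 2)).hasDerivAt.comp_hasFDerivAt (r • u)
    (hasStrictFDerivAt_norm_sq (r • u)).hasFDerivAt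
  rw [(hasDerivAt_comp_sq hp r).deriv, ← hsq]
  refine hderiv.fderiv.trans ?_
  ext v
  simp only [map_smul, smul_apply, coe_innerSL_apply, smul_eq_mul, nsmul_eq_mul, Nat.cast_ofNat]
  ring

theorem tendsto_integral_unitCutoff_norm_sq_smul [ProperSpace E] [MeasurableSpace E]
    [OpensMeasurableSpace E] {F : Type*} [NormedAddCommGroup F] [NormedSpace ℝ F] {μ : Measure E}
    {g : E → F} (hg : LocallyIntegrable g μ) :
    Tendsto (fun ε ↦ ∫ w, unitCutoff ε (‖w‖ ^ 2) • g w ∂μ) (𝓝[>] 0)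
      (𝓝 (∫ w in closedBall 0 1, g w ∂μ)) := by
  rw [← integral_indicator measurableSet_closedBall]
  refine tendsto_integral_filter_of_dominated_convergence
    ((closedBall 0 2).indicator fun w ↦ ‖g w‖) ?_ ?_ ?_ ?_
  · refine .of_forall fun ε ↦ .smul ?_ hg.aestronglyMeasurable
    exact ((contDiff_unitCutoff ε).continuous.comp (by fun_prop)).aestronglyMeasurable
  · filter_upwards [Ioc_mem_nhdsGT one_pos] with ε hε
    refine .of_forall fun w ↦ ?_
    by_cases hw : w ∈ closedBall 0 2
    · rw [indicator_of_mem hw, norm_smul]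
      exact mul_le_of_le_one_left (norm_nonneg _) (norm_unitCutoff_le_one ε _)
    · have : 2 < ‖w‖ := by simpa using hw
      rw [unitCutoff_of_one_add_le hε.1 (by nlinarith [hε.2])]
      simp [hw]
  · exact (integrable_indicator_iff measurableSet_closedBall).2
      (hg.integrableOn_isCompact (isCompact_closedBall 0 2)).norm
  · refine .of_forall fun w ↦ ?_
    have hlim := (tendsto_unitCutoff (‖w‖ ^ 2)).smul_const (g w)
    by_cases hw : ‖w‖ ≤ 1 <;> simpa [indicator, hw, sq_le_one_iff_abs_le_one] using hlim

end NormSq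

section SphereFlux

variable {E F : Type*} [NormedAddCommGroup E] [InnerProductSpace ℝ E] [FiniteDimensional ℝ E]
  [MeasurableSpace E] [BorelSpace E] {μ : Measure E} [μ.IsAddHaarMeasure]
  [NormedAddCommGroup F] [NormedSpace ℝ F]

/-- The flux of `f` through the sphere of radius `r` around `x`: the integral of `f` tensored with
the outer unit normal `u`. The surface measure of the sphere is `r ^ (finrank ℝ E - 1)` times
`μ.toSphere`, and the normal enters through the functional `⟪u, ·⟫`. -/
noncomputable def sphereFlux (μ : Measure E) (f : E → F) (x : E) (r : ℝ) : E →L[ℝ] F :=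
  r ^ (finrank ℝ E - 1) •
    ∫ u : sphere (0 : E) 1, (innerSL ℝ (u : E)).smulRight (f (x + r • (u : E))) ∂μ.toSphere

theorem continuous_uncurry_sphereFlux (μ : Measure E) [μ.IsAddHaarMeasure] {f : E → F}
    (hf : Continuous f) : Continuous (Function.uncurry (sphereFlux μ f)) := by
  have hint : Continuous fun p : E × ℝ ↦ ∫ u : sphere (0 : E) 1,
      (innerSL ℝ (u : E)).smulRight (f (p.1 + p.2 • (u : E))) ∂μ.toSphere := by
    simp_rw [← setIntegral_univ (μ := μ.toSphere)]
    refine continuous_parametric_integral_of_continuous ?_ isCompact_univ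
    exact ((ContinuousLinearMap.smulRightL ℝ E F).continuous₂).comp <|
      .prodMk ((innerSL ℝ).continuous.comp (by fun_prop)) (hf.comp (by fun_prop))
  exact (by fun_prop : Continuous fun p : E × ℝ ↦ p.2 ^ (finrank ℝ E - 1)).smul hint

theorem hasFDerivAt_integral_radial_smul [Nontrivial E] {p : ℝ → ℝ} {f : E → F}
    (hp : ContDiff ℝ 1 p) (hp_supp : p =ᶠ[atTop] 0) (hf : Continuous f) (x : E) :
    HasFDerivAt (fun y ↦ ∫ w, p (‖w‖ ^ 2) • f (y + w) ∂μ)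
      (∫ r in Ioi (0 : ℝ), -deriv (fun s ↦ p (s ^ 2)) r • sphereFlux μ f x r) x := by
  set φ : E → ℝ := fun w ↦ p (‖w‖ ^ 2)
  have hφ : ContDiff ℝ 1 φ := hp.comp (contDiff_norm_sq ℝ)
  have hφ_supp : HasCompactSupport φ := hasCompactSupport_comp_norm_sq hp_supp
  have hint : Integrable (fun w ↦ (fderiv ℝ φ w).smulRight (f (x + w))) μ := by
    refine Continuous.integrable_of_hasCompactSupport ?_ ?_
    · exact ((ContinuousLinearMap.smulRightL ℝ E F).continuous₂).comp <|
        .prodMk (hφ.continuous_fderiv one_ne_zero) (hf.comp (by fun_prop))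
    · exact (hφ_supp.fderiv ℝ).mono fun w hw h ↦ hw (by ext; simp [h])
  have hpolar : ∫ w, (fderiv ℝ φ w).smulRight (f (x + w)) ∂μ =
      ∫ r in Ioi (0 : ℝ), deriv (fun s ↦ p (s ^ 2)) r • sphereFlux μ f x r := by
    rw [integral_eq_integral_Ioi_toSphere μ hint]
    refine setIntegral_congr_fun measurableSet_Ioi fun r _ ↦ ?_
    have hpolar_fderiv (u : sphere (0 : E) 1) : (fderiv ℝ φ (r • u)).smulRight (f (x + r • u)) =
        deriv (fun s ↦ p (s ^ 2)) r • (innerSL ℝ (u : E)).smulRight (f (x + r • u)) := by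
      rw [fderiv_comp_norm_sq_smul (hp.differentiable one_ne_zero) r (norm_eq_of_mem_sphere u)]
      ext v
      simp [mul_smul]
    simp only [sphereFlux, hpolar_fderiv, integral_smul]
    exact smul_comm ..
  simp only [neg_smul, integral_neg, ← hpolar]
  exact hasFDerivAt_integral_smul_comp_add hφ hφ_supp hf.locallyIntegrable x

theorem hasFDerivAt_setIntegral_closedBall_comp_add [Nontrivial E] [CompleteSpace F] {f : E → F}
    (hf : Continuous f) (x : E) :
    HasFDerivAt (fun y ↦ ∫ w in closedBall (0 : E) 1, f (y + w) ∂μ) (sphereFlux μ f x 1) x := by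
  have hflux := continuous_uncurry_sphereFlux μ hf
  have hpos : ∀ᶠ q : ℝ × E in 𝓝[>] 0 ×ˢ 𝓝 x, 0 < q.1 :=
    tendsto_fst.eventually self_mem_nhdsWithin
  have hunif : TendstoUniformlyOnFilter (fun ε y ↦ ∫ r, shellKernel ε r • sphereFlux μ f y r)
      (fun y ↦ sphereFlux μ f y 1) (𝓝[>] 0) (𝓝 x) := by
    rw [tendstoUniformlyOnFilter_iff_tendsto]
    have hflux_one : Tendsto (fun q : ℝ × E ↦ sphereFlux μ f q.2 1) (𝓝[>] 0 ×ˢ 𝓝 x)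
        (𝓝 (sphereFlux μ f x 1)) :=
      (hflux.comp (.prodMk_left 1)).continuousAt.tendsto.comp tendsto_snd
    exact (hflux_one.prodMk_nhds (tendsto_integral_shellKernel_smul hflux x)).mono_right
      (nhds_le_uniformity _)
  refine hasFDerivAt_of_tendstoUniformlyOnFilter hunif ?_ ?_
    (f := fun ε y ↦ ∫ w, unitCutoff ε (‖w‖ ^ 2) • f (y + w) ∂μ)
  · filter_upwards [hpos] with q hq
    rw [integral_shellKernel_smul]
    exact hasFDerivAt_integral_radial_smul (contDiff_unitCutoff q.1)
      (unitCutoff_eventuallyEq_zero hq) hf q.2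
  · exact .of_forall fun y ↦ tendsto_integral_unitCutoff_norm_sq_smul
      (hf.comp (by fun_prop)).locallyIntegrable

end SphereFlux

section Average

theorem setAverage_sub_const {α F : Type*} [MeasurableSpace α] {μ : Measure α}
    [NormedAddCommGroup F] [NormedSpace ℝ F] [CompleteSpace F] {g : α → F} {s : Set α}
    (hs₀ : μ s ≠ 0) (hs : μ s ≠ ⊤) (hg : IntegrableOn g s μ) (c : F) :
    ⨍ a in s, (g a - c) ∂μ = ⨍ a in s, g a ∂μ - c := by
  rw [setAverage_eq, integral_sub hg (integrableOn_const hs), smul_sub, ← setAverage_eq,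
    ← setAverage_eq, setAverage_const hs₀ hs]

theorem toDual_integral {α E : Type*} [MeasurableSpace α] {μ : Measure α} [NormedAddCommGroup E]
    [InnerProductSpace ℝ E] [CompleteSpace E] (φ : α → E) :
    InnerProductSpace.toDual ℝ E (∫ a, φ a ∂μ) = ∫ a, innerSL ℝ (φ a) ∂μ :=
  (((InnerProductSpace.toDual ℝ E).toLinearIsometry : E →ₗᵢ[ℝ] _).integral_comp_comm φ).symm

variable {E F : Type*} [NormedAddCommGroup E] [InnerProductSpace ℝ E] [FiniteDimensional ℝ E]
  [Nontrivial E] [MeasurableSpace E] [BorelSpace E] {μ : Measure E} [μ.IsAddHaarMeasure]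
  [NormedAddCommGroup F] [NormedSpace ℝ F] [CompleteSpace F] {β : ℝ}

theorem hasFDerivAt_setIntegral_closedBall_comp_add_smul {f : E → F} (hf : Continuous f)
    (hβ : β ≠ 0) (x : E) :
    HasFDerivAt (fun y ↦ ∫ w in closedBall (0 : E) 1, f (y + β • w) ∂μ)
      (β⁻¹ • ∫ u : sphere (0 : E) 1,
        (innerSL ℝ (u : E)).smulRight (f (x + β • (u : E))) ∂μ.toSphere) x := by
  have hball := (hasFDerivAt_setIntegral_closedBall_comp_add (μ := μ)
    (hf.comp (continuous_const_smul β)) (β⁻¹ • x)).comp x ((hasFDerivAt_id x).const_smul β⁻¹)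
  simpa [sphereFlux, Function.comp_def, smul_inv_smul₀ hβ] using hball

theorem hasFDerivAt_setAverage_closedBall_comp_add_smul {f : E → F} (hf : Continuous f)
    (hβ : β ≠ 0) (x : E) :
    HasFDerivAt (fun y ↦ ⨍ w in closedBall (0 : E) 1, f (y + β • w) ∂μ)
      ((finrank ℝ E / β) • ⨍ u : sphere (0 : E) 1,
        (innerSL ℝ (u : E)).smulRight (f (x + β • (u : E))) ∂μ.toSphere) x := by
  have hdim : (finrank ℝ E : ℝ) ≠ 0 := Nat.cast_ne_zero.2 finrank_pos.ne'
  have hconst : finrank ℝ E / β * (finrank ℝ E * μ.real (ball 0 1))⁻¹ =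
      (μ.real (ball (0 : E) 1))⁻¹ * β⁻¹ := by
    field_simp
  simp only [setAverage_eq, average_eq μ.toSphere, μ.toSphere_real_apply_univ, smul_smul, hconst,
    μ.addHaar_real_closedBall_eq_addHaar_real_ball]
  rw [mul_smul]
  exact (hasFDerivAt_setIntegral_closedBall_comp_add_smul hf hβ x).const_smul _

theorem uniform_smoothing_gradient_unbiased_general {f : E → ℝ} (hf : Continuous f)
    (hβ : β ≠ 0) (x : E) :
    HasGradientAt (fun y ↦ ⨍ w in closedBall (0 : E) 1, f (y + β • w) ∂μ)
      (⨍ u : sphere (0 : E) 1,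
        ((finrank ℝ E / β) * (f (x + β • (u : E)) - f x)) • (u : E) ∂μ.toSphere) x := by
  have hflux : InnerProductSpace.toDual ℝ E (⨍ u : sphere (0 : E) 1,
      ((finrank ℝ E / β) * (f (x + β • (u : E)) - f x)) • (u : E) ∂μ.toSphere) =
      (finrank ℝ E / β) • ⨍ u : sphere (0 : E) 1,
        (innerSL ℝ (u : E)).smulRight (f (x + β • (u : E)) - f x) ∂μ.toSphere := by
    rw [average_eq', average_eq', toDual_integral, ← integral_smul]
    congr! 2 with u
    ext v
    simp only [map_smul, coe_innerSL_apply, smul_apply,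
      ContinuousLinearMap.smulRight_apply, smul_eq_mul]
    ring
  rw [hasGradientAt_iff_hasFDerivAt, hflux]
  have hcentred : (fun y ↦ ⨍ w in closedBall (0 : E) 1, f (y + β • w) ∂μ) =
      fun y ↦ ⨍ w in closedBall (0 : E) 1, (f (y + β • w) - f x) ∂μ + f x := by
    funext y
    have : Continuous fun w ↦ f (y + β • w) := by fun_prop
    rw [setAverage_sub_const (measure_closedBall_pos μ 0 one_pos).ne' measure_closedBall_lt_top.ne
      (this.continuousOn.integrableOn_compact (isCompact_closedBall 0 1)), sub_add_cancel]
  rw [hcentred]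
  exact (hasFDerivAt_setAverage_closedBall_comp_add_smul
    (hf.sub continuous_const) hβ x).add_const (f x)

end Average

/-- Unbiasedness of the uniform smoothing gradient estimator for the smoothed function:
`f_β` is differentiable at every `x` with
`∇f_β(x) = E_{u ~ Unif(S)}[(d/β)(f(x + βu) − f(x)) u]`. -/
theorem uniform_smoothing_gradient_unbiased
    (d : ℕ) (hd : 1 ≤ d)
    (f : EuclideanSpace ℝ (Fin d) → ℝ)
    (L : ℝ) (hL : 0 < L)
    (hdiff : Differentiable ℝ f)
    (hLip : ∀ u v, ‖gradient f u - gradient f v‖ ≤ L * ‖u - v‖)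
    (β : ℝ) (hβ : 0 < β) :
    ∀ x : EuclideanSpace ℝ (Fin d),
      HasGradientAt (fun y => ∫ u, f (y + β • u) ∂(uniformUnitBall d))
        (∫ u : Metric.sphere (0 : EuclideanSpace ℝ (Fin d)) 1,
          (((d : ℝ) / β) * (f (x + β • (u : EuclideanSpace ℝ (Fin d))) - f x)) •
            (u : EuclideanSpace ℝ (Fin d)) ∂(uniformUnitSphere d)) x := by
  have : NeZero d := ⟨by omega⟩
  intro x
  simpa only [uniformUnitBall, uniformUnitSphere, average_eq',
    Measure.restrict_apply_univ, finrank_euclideanSpace_fin] using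
    uniform_smoothing_gradient_unbiased_general (μ := volume) hdiff.continuous hβ.ne' x
end

section
/- Master summed Frank–Wolfe gap bound: for every integer T ≥ 1, η ∑_{t=1}^{T−1} G(z_t) ≤ (f(z_0) − inf_{y∈X} f(y)) + 4 T L η² D² + 2ηD ∑_{t=0}^{T−1} ‖∇f(z_t) − v_t‖ + ηD ∑_{t=0}^{T−2} θ_t (∑_{i=t+1}^{T−1} 1/(i+2)) ‖∇f(z_t) − v_t‖. -/
open scoped RealInnerProductSpace

/-!
The lag `Δ_t = (t + 1) (x_t - z_t)` turns the three recursions into the two linear ones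
`z_{t+1} - z_t = η (w_t - z_t) + θ_t Δ_{t+1}` and
`Δ_{t+1} = (1 - η) Δ_t + η / (t + 2) (w_t - x_t)`, with `Δ_0 = 0`. The second one is a contraction,
so both `‖Δ_t‖` and `⟪∇f(z_t), Δ_{t+1}⟫` are at most the sums of its forcing terms. The oracle
property of `w_s`, applied to the foreign gradient `∇f(z_t)`, bounds these terms by the oracle error
`‖∇f(z_s) - v_s‖` plus the drift `L ‖z_t - z_s‖ ≤ 2 L η D (t - s)`, and the weight `θ_t` absorbs
the accumulated drift. The descent lemma then bounds each `η G(z_t)` by a telescoping decrease of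
`f` plus these errors.
-/

open Finset
open scoped NNReal

section Sums

lemma le_sum_range_of_le_mul_add {R : Type*} [Semiring R] [PartialOrder R] [IsOrderedRing R]
    {q : R} (hq0 : 0 ≤ q) (hq1 : q ≤ 1) {a c : ℕ → R} (ha : a 0 ≤ 0) {n : ℕ}
    (hc : ∀ s < n, 0 ≤ c s) (h : ∀ s < n, a (s + 1) ≤ q * a s + c s) :
    a n ≤ ∑ s ∈ range n, c s := by
  induction n with
  | zero => simpa using ha
  | succ n ih =>
    have hn : a n ≤ ∑ s ∈ range n, c s :=
      ih (fun s hs => hc s (by lia)) fun s hs => h s (by lia)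
    have hsum : 0 ≤ ∑ s ∈ range n, c s :=
      sum_nonneg fun s hs => hc s ((mem_range.1 hs).trans n.lt_succ_self)
    calc a (n + 1) ≤ q * a n + c n := h n n.lt_succ_self
      _ ≤ q * ∑ s ∈ range n, c s + c n := by gcongr
      _ ≤ ∑ s ∈ range n, c s + c n := by gcongr; exact mul_le_of_le_one_left hsum hq1
      _ = ∑ s ∈ range (n + 1), c s := (sum_range_succ c n).symm

lemma sum_range_mul_sum_range {R : Type*} [CommSemiring R] (c a : ℕ → R) (T : ℕ) :
    ∑ t ∈ range T, c t * ∑ s ∈ range t, a s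
      = ∑ s ∈ range (T - 1), a s * ∑ t ∈ Ico (s + 1) T, c t := by
  have hlast : ∑ s ∈ range (T - 1), a s * ∑ t ∈ Ico (s + 1) T, c t
      = ∑ s ∈ range T, a s * ∑ t ∈ Ico (s + 1) T, c t := by
    refine sum_subset (range_subset_range.2 T.pred_le) fun s _ hs => ?_
    rw [Ico_eq_empty (by have := mem_range.not.1 hs; lia), sum_empty, mul_zero]
  rw [hlast]
  simp only [mul_sum, range_eq_Ico, sum_Ico_Ico_comm', mul_comm]

end Sums

section SmoothFunctions

variable {E : Type*} [NormedAddCommGroup E] [InnerProductSpace ℝ E] [CompleteSpace E]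
  {X : Set E} {f : E → ℝ} {f' : E → E} {L : ℝ≥0}

lemma le_add_inner_add_sq_of_lipschitzOnWith_gradient (hX : Convex ℝ X)
    (hf : ∀ u ∈ X, HasGradientWithinAt f (f' u) X u) (hL : LipschitzOnWith L f' X)
    {a b : E} (ha : a ∈ X) (hb : b ∈ X) :
    f b ≤ f a + ⟪f' a, b - a⟫ + L / 2 * ‖b - a‖ ^ 2 := by
  let p : ℝ → E := AffineMap.lineMap a b
  have hp : Set.MapsTo p (Set.Icc 0 1) X := hX.mapsTo_lineMap ha hb
  let φ : ℝ → ℝ := fun s => f (p s) - (s * ⟪f' a, b - a⟫ + s ^ 2 * (L / 2 * ‖b - a‖ ^ 2))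
  let φ' : ℝ → ℝ := fun s =>
    ⟪f' (p s), b - a⟫ - (⟪f' a, b - a⟫ + 2 * s * (L / 2 * ‖b - a‖ ^ 2))
  have hφ : ∀ s ∈ Set.Icc (0 : ℝ) 1, HasDerivWithinAt φ (φ' s) (Set.Icc 0 1) s := by
    intro s hs
    have hfp : HasDerivWithinAt (f ∘ p) ⟪f' (p s), b - a⟫ (Set.Icc 0 1) s :=
      (hf _ (hp hs)).hasFDerivWithinAt.comp_hasDerivWithinAt s
        AffineMap.hasDerivWithinAt_lineMap hp
    have hquad := ((hasDerivAt_id s).mul_const ⟪f' a, b - a⟫).add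
      ((hasDerivAt_pow 2 s).mul_const (L / 2 * ‖b - a‖ ^ 2))
    exact (hfp.sub hquad.hasDerivWithinAt).congr_deriv (by simp [φ'])
  have hφ'_nonpos : ∀ s ∈ Set.Icc (0 : ℝ) 1, φ' s ≤ 0 := by
    intro s hs
    have hlip : ‖f' (p s) - f' a‖ ≤ L * (s * ‖b - a‖) := by
      refine (hL.norm_sub_le (hp hs) ha).trans_eq ?_
      rw [← dist_eq_norm (p s), dist_lineMap_left, Real.norm_of_nonneg hs.1, dist_eq_norm']
    have : ⟪f' (p s) - f' a, b - a⟫ ≤ L * (s * ‖b - a‖) * ‖b - a‖ :=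
      (real_inner_le_norm _ _).trans (by gcongr)
    rw [inner_sub_left] at this
    simp only [φ']
    linarith
  have hanti : AntitoneOn φ (Set.Icc 0 1) :=
    antitoneOn_of_hasDerivWithinAt_nonpos (convex_Icc 0 1)
      (fun s hs => (hφ s hs).continuousWithinAt)
      (fun s hs => (hφ s (interior_subset hs)).mono interior_subset)
      fun s hs => hφ'_nonpos s (interior_subset hs)
  have : f b ≤ f a + (⟪f' a, b - a⟫ + L / 2 * ‖b - a‖ ^ 2) := by
    simpa [φ, p] using hanti (Set.left_mem_Icc.2 zero_le_one) (Set.right_mem_Icc.2 zero_le_one)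
      zero_le_one
  linarith

lemma bddBelow_image_of_lipschitzOnWith_gradient (hX : Convex ℝ X) {D : ℝ}
    (hD : ∀ u ∈ X, ∀ v ∈ X, ‖u - v‖ ≤ D)
    (hf : ∀ u ∈ X, HasGradientWithinAt f (f' u) X u) (hL : LipschitzOnWith L f' X) :
    BddBelow (f '' X) := by
  obtain rfl | ⟨a, ha⟩ := X.eq_empty_or_nonempty
  · simp
  refine ⟨f a - ((‖f' a‖ + L * D) * D + L / 2 * D ^ 2), ?_⟩
  rintro _ ⟨b, hb, rfl⟩
  have hab : ‖a - b‖ ≤ D := hD a ha b hb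
  have hgrad : ‖f' b‖ ≤ ‖f' a‖ + L * D :=
    calc ‖f' b‖ ≤ ‖f' a‖ + ‖f' b - f' a‖ := norm_le_norm_add_norm_sub' _ _
      _ ≤ ‖f' a‖ + L * D := by
        gcongr
        exact (hL.norm_sub_le hb ha).trans (by gcongr; exact hD b hb a ha)
  have hinner : ⟪f' b, a - b⟫ ≤ (‖f' a‖ + L * D) * D :=
    (real_inner_le_norm _ _).trans
      (mul_le_mul hgrad hab (norm_nonneg _) ((norm_nonneg _).trans hgrad))
  have hsq : (L : ℝ) / 2 * ‖a - b‖ ^ 2 ≤ L / 2 * D ^ 2 := by gcongr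
  linarith [le_add_inner_add_sq_of_lipschitzOnWith_gradient hX hf hL hb ha]

end SmoothFunctions

section Oracle

variable {E : Type*} [NormedAddCommGroup E] [InnerProductSpace ℝ E] {X : Set E} {g v w z : E}

/-- The Frank–Wolfe gap over `X` at `x` of a function whose gradient at `x` is `g`. Taking the
gradient vector as an argument makes sense of it for functions given only on `X`. -/
noncomputable def frankWolfeGap (X : Set E) (g x : E) : ℝ :=
  sSup ((fun w => ⟪w - x, -g⟫) '' X)

lemma frankWolfeGap_nonneg (hz : z ∈ X) : 0 ≤ frankWolfeGap X g z :=
  Real.sSup_nonneg' ⟨0, ⟨z, hz, by simp⟩, le_rfl⟩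

lemma inner_sub_le_of_isMaxOn (hw : IsMaxOn (fun u => ⟪u, -v⟫) X w) {u : E} (hu : u ∈ X) :
    ⟪g, w - u⟫ ≤ ‖g - v‖ * ‖w - u‖ := by
  have hv : ⟪v, w - u⟫ ≤ 0 := by
    have : ⟪u, -v⟫ ≤ ⟪w, -v⟫ := hw hu
    rw [inner_neg_right, inner_neg_right, real_inner_comm, real_inner_comm v w] at this
    rw [inner_sub_right]
    linarith
  calc ⟪g, w - u⟫ = ⟪g - v, w - u⟫ + ⟪v, w - u⟫ := by rw [← inner_add_left, sub_add_cancel]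
    _ ≤ ‖g - v‖ * ‖w - u‖ := by linarith [real_inner_le_norm (g - v) (w - u)]

lemma frankWolfeGap_add_inner_le (hX : X.Nonempty) (hw : IsMaxOn (fun u => ⟪u, -v⟫) X w) {D : ℝ}
    (hD : ∀ u ∈ X, ‖w - u‖ ≤ D) :
    frankWolfeGap X g z + ⟪g, w - z⟫ ≤ ‖g - v‖ * D := by
  rw [← le_sub_iff_add_le]
  refine csSup_le (hX.image _) ?_
  rintro _ ⟨u, hu, rfl⟩
  have hsplit : ⟪u - z, -g⟫ = ⟪g, w - u⟫ - ⟪g, w - z⟫ := by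
    rw [real_inner_comm, inner_neg_left, ← inner_neg_right, ← inner_sub_right]
    congr 1
    abel
  have horacle : ⟪g, w - u⟫ ≤ ‖g - v‖ * D :=
    (inner_sub_le_of_isMaxOn hw hu).trans (by gcongr; exact hD u hu)
  change ⟪u - z, -g⟫ ≤ _
  linarith

end Oracle

section StepExcess

/-- The sequence `θ_t = 1 / ((t + 1) (t + 2))`: the step size `(1 + θ_t) η` of the sequence `x`
exceeds the step size `η` of the sequence `y` by the factor `1 + θ_t`. -/
noncomputable def stepExcess (t : ℕ) : ℝ := 1 / (((t : ℝ) + 1) * ((t : ℝ) + 2))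

lemma stepExcess_nonneg (t : ℕ) : 0 ≤ stepExcess t := by
  unfold stepExcess
  positivity

lemma stepExcess_le_half (t : ℕ) : stepExcess t ≤ 1 / 2 := by
  have : (0 : ℝ) ≤ t := t.cast_nonneg
  exact one_div_le_one_div_of_le two_pos (by nlinarith)

lemma stepExcess_mul_succ (t : ℕ) : stepExcess t * (t + 1) = 1 / (t + 2) := by
  unfold stepExcess
  field_simp

lemma one_div_cast_add_two_le_one (t : ℕ) : 1 / ((t : ℝ) + 2) ≤ 1 := by
  rw [div_le_one (by positivity)]
  linarith [(t.cast_nonneg : (0 : ℝ) ≤ t)]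

lemma stepExcess_mul_one_div_le {s t : ℕ} (hst : s ≤ t) :
    stepExcess t * (1 / (s + 2)) ≤ 1 / (t + 2) * stepExcess s := by
  have : (s : ℝ) ≤ t := mod_cast hst
  calc stepExcess t * (1 / (s + 2))
      = 1 / (t + 2) * (1 / (((t : ℝ) + 1) * (s + 2))) := by unfold stepExcess; field_simp
    _ ≤ 1 / (t + 2) * stepExcess s := by unfold stepExcess; gcongr

lemma stepExcess_mul_sum_le {e : ℕ → ℝ} (he : ∀ s, 0 ≤ e s) {c : ℝ} (hc : 0 ≤ c) (t : ℕ) :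
    stepExcess t * ∑ s ∈ range (t + 1), 1 / ((s : ℝ) + 2) * (e s + t * c)
      ≤ e t + 1 / (t + 2) * ∑ s ∈ range t, stepExcess s * e s + c := by
  have hθ := stepExcess_nonneg t
  have hterm : ∀ s ∈ range (t + 1), stepExcess t * (1 / ((s : ℝ) + 2) * (e s + t * c))
      ≤ 1 / (t + 2) * (stepExcess s * e s) + stepExcess t * (t * c) := by
    intro s hs
    have hexcess : stepExcess t * (1 / (s + 2)) * e s ≤ 1 / (t + 2) * stepExcess s * e s :=
      mul_le_mul_of_nonneg_right
        (stepExcess_mul_one_div_le (Nat.lt_succ_iff.1 (mem_range.1 hs))) (he s)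
    have hconst : 1 / ((s : ℝ) + 2) * (stepExcess t * (t * c)) ≤ stepExcess t * (t * c) :=
      mul_le_of_le_one_left (by positivity) (one_div_cast_add_two_le_one s)
    linarith
  have hlast : 1 / (t + 2) * stepExcess t * e t ≤ e t :=
    mul_le_of_le_one_left (he t) <| mul_le_one₀ (one_div_cast_add_two_le_one t) hθ <|
      (stepExcess_le_half t).trans (by norm_num)
  have hdrift : stepExcess t * (t + 1) * t * c ≤ c := by
    refine mul_le_of_le_one_left hc ?_
    rw [stepExcess_mul_succ, one_div_mul_eq_div, div_le_one (by positivity)]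
    linarith
  calc stepExcess t * ∑ s ∈ range (t + 1), 1 / ((s : ℝ) + 2) * (e s + t * c)
      ≤ ∑ s ∈ range (t + 1),
          (1 / (t + 2) * (stepExcess s * e s) + stepExcess t * (t * c)) := by
        rw [mul_sum]
        exact sum_le_sum hterm
    _ = 1 / (t + 2) * stepExcess t * e t + 1 / (t + 2) * ∑ s ∈ range t, stepExcess s * e s
        + stepExcess t * (t + 1) * t * c := by
        rw [sum_add_distrib, ← mul_sum, sum_range_succ, sum_const, card_range, nsmul_eq_mul]
        push_cast
        ring
    _ ≤ e t + 1 / (t + 2) * ∑ s ∈ range t, stepExcess s * e s + c := by gcongr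

end StepExcess

/-- The recursion of the momentum Frank–Wolfe method with step size `η`, driven by an arbitrary
sequence `w` of oracle answers: `x` takes the slightly longer steps `(1 + θ_t) η`, `y` takes steps
`η` from `z`, and `z` averages the two with weight `α_{t+1} = 1 / (t + 2)` on `x`. No iterate
depends on `y 0`, which is left unconstrained. -/
structure IsMomentumFrankWolfe {E : Type*} [AddCommGroup E] [Module ℝ E] (η : ℝ)
    (w x y z : ℕ → E) : Prop where
  x_zero : x 0 = z 0
  x_succ (t : ℕ) : x (t + 1) = x t + ((1 + stepExcess t) * η) • (w t - x t)
  y_succ (t : ℕ) : y (t + 1) = z t + η • (w t - z t)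
  z_succ (t : ℕ) :
    z (t + 1) = (1 - 1 / ((t : ℝ) + 2)) • y (t + 1) + (1 / ((t : ℝ) + 2)) • x (t + 1)

/-- The lag `Δ_t = (t + 1) (x_t - z_t)` of `z` behind `x`, scaled so that it satisfies a linear
recursion with constant coefficient. -/
def momentumLag {E : Type*} [AddCommGroup E] [Module ℝ E] (x z : ℕ → E) (t : ℕ) : E :=
  ((t : ℝ) + 1) • (x t - z t)

namespace IsMomentumFrankWolfe

section Module

variable {E : Type*} [AddCommGroup E] [Module ℝ E] {η : ℝ} {w x y z : ℕ → E}

lemma lag_zero (h : IsMomentumFrankWolfe η w x y z) : momentumLag x z 0 = 0 := by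
  simp [momentumLag, h.x_zero]

lemma lag_succ (h : IsMomentumFrankWolfe η w x y z) (t : ℕ) :
    momentumLag x z (t + 1)
      = (1 - η) • momentumLag x z t + (η * (1 / (t + 2))) • (w t - x t) := by
  simp only [momentumLag, h.z_succ, h.x_succ, h.y_succ, stepExcess]
  push_cast
  match_scalars <;> field_simp <;> ring

lemma z_succ_sub (h : IsMomentumFrankWolfe η w x y z) (t : ℕ) :
    z (t + 1) - z t = η • (w t - z t) + stepExcess t • momentumLag x z (t + 1) := by
  simp only [momentumLag, h.z_succ, h.y_succ, stepExcess]
  push_cast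
  match_scalars <;> field_simp <;> ring

lemma x_mem (h : IsMomentumFrankWolfe η w x y z) (hη : 0 ≤ η) (hη' : η ≤ 2 / 3) {X : Set E}
    (hX : Convex ℝ X) (hw : ∀ t, w t ∈ X) (hz : z 0 ∈ X) (t : ℕ) : x t ∈ X := by
  induction t with
  | zero => rwa [h.x_zero]
  | succ t ih =>
    rw [h.x_succ]
    have hθ := stepExcess_nonneg t
    exact hX.add_smul_sub_mem ih (hw t) ⟨by positivity, by nlinarith [stepExcess_le_half t]⟩

lemma z_mem (h : IsMomentumFrankWolfe η w x y z) (hη : 0 ≤ η) (hη' : η ≤ 2 / 3) {X : Set E}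
    (hX : Convex ℝ X) (hw : ∀ t, w t ∈ X) (hz : z 0 ∈ X) (t : ℕ) : z t ∈ X := by
  induction t with
  | zero => exact hz
  | succ t ih =>
    have hy : y (t + 1) ∈ X := by
      rw [h.y_succ]
      exact hX.add_smul_sub_mem ih (hw t) ⟨hη, by linarith⟩
    rw [h.z_succ]
    exact hX hy (h.x_mem hη hη' hX hw hz (t + 1))
      (sub_nonneg.2 (one_div_cast_add_two_le_one t)) (by positivity) (sub_add_cancel _ _)

end Module

section Normed

variable {E : Type*} [NormedAddCommGroup E] [NormedSpace ℝ E] {η D : ℝ} {w x y z : ℕ → E}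

lemma norm_lag_le (h : IsMomentumFrankWolfe η w x y z) (hη : 0 ≤ η) (hη' : η ≤ 1)
    (hwx : ∀ t, ‖w t - x t‖ ≤ D) (t : ℕ) : ‖momentumLag x z t‖ ≤ t * (η * D) := by
  have hD : 0 ≤ D := (norm_nonneg _).trans (hwx 0)
  have hrec (s : ℕ) : ‖momentumLag x z (s + 1)‖ ≤ (1 - η) * ‖momentumLag x z s‖ + η * D :=
    calc ‖momentumLag x z (s + 1)‖
        ≤ (1 - η) * ‖momentumLag x z s‖ + η * (1 / (s + 2)) * ‖w s - x s‖ := by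
          rw [h.lag_succ]
          exact norm_add_le_of_le (norm_smul_of_nonneg (sub_nonneg.2 hη') _).le
            (norm_smul_of_nonneg (by positivity) _).le
      _ ≤ (1 - η) * ‖momentumLag x z s‖ + η * 1 * D := by
          gcongr
          exacts [one_div_cast_add_two_le_one s, hwx s]
      _ = (1 - η) * ‖momentumLag x z s‖ + η * D := by rw [mul_one]
  simpa using le_sum_range_of_le_mul_add (a := fun s => ‖momentumLag x z s‖)
    (c := fun _ => η * D) (n := t) (sub_nonneg.2 hη') (sub_le_self 1 hη)
    (by simp [h.lag_zero]) (fun _ _ => by positivity) fun s _ => hrec s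

lemma norm_z_succ_sub_le (h : IsMomentumFrankWolfe η w x y z) (hη : 0 ≤ η) (hη' : η ≤ 1)
    (hwx : ∀ t, ‖w t - x t‖ ≤ D) (hwz : ∀ t, ‖w t - z t‖ ≤ D) (t : ℕ) :
    ‖z (t + 1) - z t‖ ≤ 2 * (η * D) := by
  have hD : 0 ≤ D := (norm_nonneg _).trans (hwx 0)
  have hlag : stepExcess t * ‖momentumLag x z (t + 1)‖ ≤ η * D :=
    calc stepExcess t * ‖momentumLag x z (t + 1)‖
        ≤ stepExcess t * ((t + 1 : ℕ) * (η * D)) := by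
          gcongr
          exacts [stepExcess_nonneg t, h.norm_lag_le hη hη' hwx (t + 1)]
      _ = 1 / (t + 2) * (η * D) := by rw [← stepExcess_mul_succ]; push_cast; ring
      _ ≤ η * D := mul_le_of_le_one_left (by positivity) (one_div_cast_add_two_le_one t)
  calc ‖z (t + 1) - z t‖ ≤ η * ‖w t - z t‖ + stepExcess t * ‖momentumLag x z (t + 1)‖ := by
        rw [h.z_succ_sub]
        exact norm_add_le_of_le (norm_smul_of_nonneg hη _).le
          (norm_smul_of_nonneg (stepExcess_nonneg t) _).le
    _ ≤ η * D + η * D := by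
        gcongr
        exact hwz t
    _ = 2 * (η * D) := by ring

lemma norm_z_sub_le (h : IsMomentumFrankWolfe η w x y z) (hη : 0 ≤ η) (hη' : η ≤ 1)
    (hwx : ∀ t, ‖w t - x t‖ ≤ D) (hwz : ∀ t, ‖w t - z t‖ ≤ D) {s t : ℕ} (hst : s ≤ t) :
    ‖z t - z s‖ ≤ t * (2 * (η * D)) := by
  have hD : 0 ≤ D := (norm_nonneg _).trans (hwx 0)
  calc ‖z t - z s‖ = dist (z s) (z t) := (dist_eq_norm' _ _).symm
    _ ≤ ∑ _i ∈ Ico s t, 2 * (η * D) := dist_le_Ico_sum_of_dist_le hst fun {i} _ _ => by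
        rw [dist_eq_norm']
        exact h.norm_z_succ_sub_le hη hη' hwx hwz i
    _ = (t - s : ℕ) * (2 * (η * D)) := by simp
    _ ≤ t * (2 * (η * D)) := by
        gcongr
        exact t.sub_le s

end Normed

section Inner

variable {E : Type*} [NormedAddCommGroup E] [InnerProductSpace ℝ E] {X : Set E} {f' : E → E}
  {L : ℝ≥0} {η D : ℝ} {v w x y z : ℕ → E}

lemma inner_lag_le (h : IsMomentumFrankWolfe η w x y z) (hη : 0 ≤ η) (hη' : η ≤ 1) (g : E)
    {b : ℕ → ℝ} {n : ℕ} (hb : ∀ s < n, 0 ≤ b s) (hg : ∀ s < n, ⟪g, w s - x s⟫ ≤ b s) :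
    ⟪g, momentumLag x z n⟫ ≤ ∑ s ∈ range n, η * (1 / (s + 2)) * b s := by
  refine le_sum_range_of_le_mul_add (a := fun s => ⟪g, momentumLag x z s⟫) (sub_nonneg.2 hη')
    (sub_le_self 1 hη) (by simp [h.lag_zero]) (fun s hs => ?_) fun s hs => ?_
  · have := hb s hs
    positivity
  · simp only [h.lag_succ, inner_add_right, real_inner_smul_right]
    gcongr
    exact hg s hs

lemma inner_gradient_sub_le (h : IsMomentumFrankWolfe η w x y z) (hη : 0 ≤ η) (hη' : η ≤ 1)
    (hD : ∀ u ∈ X, ∀ v ∈ X, ‖u - v‖ ≤ D) (hL : LipschitzOnWith L f' X)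
    (hw : ∀ t, w t ∈ X) (hv : ∀ t, IsMaxOn (fun u => ⟪u, -v t⟫) X (w t))
    (hx : ∀ t, x t ∈ X) (hz : ∀ t, z t ∈ X) {s t : ℕ} (hst : s ≤ t) :
    ⟪f' (z t), w s - x s⟫ ≤ (‖f' (z s) - v s‖ + L * (t * (2 * (η * D)))) * D := by
  have hdrift : ‖f' (z t) - f' (z s)‖ ≤ L * (t * (2 * (η * D))) :=
    (hL.norm_sub_le (hz t) (hz s)).trans <| by
      gcongr
      exact h.norm_z_sub_le hη hη' (fun i => hD _ (hw i) _ (hx i))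
        (fun i => hD _ (hw i) _ (hz i)) hst
  have herror : ‖f' (z t) - v s‖ ≤ ‖f' (z s) - v s‖ + L * (t * (2 * (η * D))) := by
    linarith [norm_sub_le_norm_sub_add_norm_sub (f' (z t)) (f' (z s)) (v s)]
  calc ⟪f' (z t), w s - x s⟫
      ≤ ‖f' (z t) - v s‖ * ‖w s - x s‖ := inner_sub_le_of_isMaxOn (hv s) (hx s)
    _ ≤ (‖f' (z s) - v s‖ + L * (t * (2 * (η * D)))) * D :=
        mul_le_mul herror (hD _ (hw s) _ (hx s)) (norm_nonneg _) ((norm_nonneg _).trans herror)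

lemma stepExcess_mul_inner_lag_le (h : IsMomentumFrankWolfe η w x y z) (hη : 0 ≤ η) (hη' : η ≤ 1)
    (hD : ∀ u ∈ X, ∀ v ∈ X, ‖u - v‖ ≤ D) (hL : LipschitzOnWith L f' X)
    (hw : ∀ t, w t ∈ X) (hv : ∀ t, IsMaxOn (fun u => ⟪u, -v t⟫) X (w t))
    (hx : ∀ t, x t ∈ X) (hz : ∀ t, z t ∈ X) (t : ℕ) :
    stepExcess t * ⟪f' (z t), momentumLag x z (t + 1)⟫
      ≤ η * D * ‖f' (z t) - v t‖
        + η * D * (1 / (t + 2) * ∑ s ∈ range t, stepExcess s * ‖f' (z s) - v s‖)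
        + 2 * L * η ^ 2 * D ^ 2 := by
  have hD0 : 0 ≤ D := (norm_nonneg _).trans (hD _ (hw 0) _ (hw 0))
  calc stepExcess t * ⟪f' (z t), momentumLag x z (t + 1)⟫
      ≤ stepExcess t * ∑ s ∈ range (t + 1), η * (1 / (s + 2))
          * ((‖f' (z s) - v s‖ + L * (t * (2 * (η * D)))) * D) := by
        gcongr
        · exact stepExcess_nonneg t
        · exact h.inner_lag_le hη hη' _ (fun s _ => by positivity) fun s hs =>
            h.inner_gradient_sub_le hη hη' hD hL hw hv hx hz (Nat.lt_succ_iff.1 hs)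
    _ = η * D * (stepExcess t * ∑ s ∈ range (t + 1),
          1 / ((s : ℝ) + 2) * (‖f' (z s) - v s‖ + t * (2 * L * η * D))) := by
        simp only [mul_sum]
        exact sum_congr rfl fun s _ => by ring
    _ ≤ η * D * (‖f' (z t) - v t‖
          + 1 / (t + 2) * ∑ s ∈ range t, stepExcess s * ‖f' (z s) - v s‖ + 2 * L * η * D) := by
        gcongr
        exact stepExcess_mul_sum_le (fun s => norm_nonneg _) (by positivity) t
    _ = _ := by ring

lemma mul_frankWolfeGap_le [CompleteSpace E] {f : E → ℝ} (h : IsMomentumFrankWolfe η w x y z)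
    (hη : 0 ≤ η) (hη' : η ≤ 1) (hX : Convex ℝ X) (hD : ∀ u ∈ X, ∀ v ∈ X, ‖u - v‖ ≤ D)
    (hf : ∀ u ∈ X, HasGradientWithinAt f (f' u) X u) (hL : LipschitzOnWith L f' X)
    (hw : ∀ t, w t ∈ X) (hv : ∀ t, IsMaxOn (fun u => ⟪u, -v t⟫) X (w t))
    (hx : ∀ t, x t ∈ X) (hz : ∀ t, z t ∈ X) (t : ℕ) :
    η * frankWolfeGap X (f' (z t)) (z t)
      ≤ (f (z t) - f (z (t + 1))) + 4 * L * η ^ 2 * D ^ 2 + 2 * η * D * ‖f' (z t) - v t‖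
        + η * D * (1 / (t + 2) * ∑ s ∈ range t, stepExcess s * ‖f' (z s) - v s‖) := by
  have hdescent : f (z (t + 1))
      ≤ f (z t) + ⟪f' (z t), z (t + 1) - z t⟫ + L / 2 * ‖z (t + 1) - z t‖ ^ 2 :=
    le_add_inner_add_sq_of_lipschitzOnWith_gradient hX hf hL (hz t) (hz (t + 1))
  have hstep : L / 2 * ‖z (t + 1) - z t‖ ^ 2 ≤ L / 2 * (2 * (η * D)) ^ 2 := by
    gcongr
    exact h.norm_z_succ_sub_le hη hη' (fun i => hD _ (hw i) _ (hx i))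
      (fun i => hD _ (hw i) _ (hz i)) t
  have hgap : η * (frankWolfeGap X (f' (z t)) (z t) + ⟪f' (z t), w t - z t⟫)
      ≤ η * (‖f' (z t) - v t‖ * D) := by
    gcongr
    exact frankWolfeGap_add_inner_le ⟨_, hw t⟩ (hv t) fun u hu => hD _ (hw t) u hu
  have hlag := h.stepExcess_mul_inner_lag_le hη hη' hD hL hw hv hx hz t
  rw [h.z_succ_sub, inner_add_right, real_inner_smul_right, real_inner_smul_right] at hdescent
  rw [h.z_succ_sub] at hstep
  linarith

end Inner

end IsMomentumFrankWolfe

theorem momentum_fw_master_gap_bound_general {E : Type*} [NormedAddCommGroup E]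
    [InnerProductSpace ℝ E] [CompleteSpace E] {X : Set E} {f : E → ℝ} {f' : E → E} {L : ℝ≥0}
    {η D : ℝ} {v w x y z : ℕ → E} (hX : Convex ℝ X) (hD : ∀ u ∈ X, ∀ v ∈ X, ‖u - v‖ ≤ D)
    (hf : ∀ u ∈ X, HasGradientWithinAt f (f' u) X u) (hL : LipschitzOnWith L f' X)
    (hη : 0 ≤ η) (hη' : η ≤ 2 / 3) (h : IsMomentumFrankWolfe η w x y z) (hz : z 0 ∈ X)
    (hw : ∀ t, w t ∈ X) (hv : ∀ t, IsMaxOn (fun u => ⟪u, -v t⟫) X (w t)) (T : ℕ) :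
    η * ∑ t ∈ Ico 1 T, frankWolfeGap X (f' (z t)) (z t)
      ≤ (f (z 0) - sInf (f '' X)) + 4 * T * L * η ^ 2 * D ^ 2
        + 2 * η * D * ∑ t ∈ range T, ‖f' (z t) - v t‖
        + η * D * ∑ t ∈ range (T - 1),
            stepExcess t * (∑ i ∈ Ico (t + 1) T, 1 / ((i : ℝ) + 2)) * ‖f' (z t) - v t‖ := by
  have hxX := h.x_mem hη hη' hX hw hz
  have hzX := h.z_mem hη hη' hX hw hz
  have hinf : sInf (f '' X) ≤ f (z T) :=
    csInf_le (bddBelow_image_of_lipschitzOnWith_gradient hX hD hf hL) ⟨z T, hzX T, rfl⟩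
  calc η * ∑ t ∈ Ico 1 T, frankWolfeGap X (f' (z t)) (z t)
      ≤ ∑ t ∈ range T, η * frankWolfeGap X (f' (z t)) (z t) := by
        rw [← mul_sum, range_eq_Ico]
        gcongr
        · exact fun t _ _ => frankWolfeGap_nonneg (hzX t)
        · exact zero_le_one
    _ ≤ ∑ t ∈ range T, ((f (z t) - f (z (t + 1))) + 4 * L * η ^ 2 * D ^ 2
          + 2 * η * D * ‖f' (z t) - v t‖
          + η * D * (1 / (t + 2) * ∑ s ∈ range t, stepExcess s * ‖f' (z s) - v s‖)) :=
        sum_le_sum fun t _ =>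
          h.mul_frankWolfeGap_le hη (by linarith) hX hD hf hL hw hv hxX hzX t
    _ = (f (z 0) - f (z T)) + 4 * T * L * η ^ 2 * D ^ 2
        + 2 * η * D * ∑ t ∈ range T, ‖f' (z t) - v t‖
        + η * D * ∑ t ∈ range (T - 1),
            stepExcess t * (∑ i ∈ Ico (t + 1) T, 1 / ((i : ℝ) + 2)) * ‖f' (z t) - v t‖ := by
        simp only [sum_add_distrib, ← mul_sum, sum_range_sub', sum_range_mul_sum_range, sum_const,
          card_range, nsmul_eq_mul, mul_right_comm (stepExcess _)]
        ring
    _ ≤ _ := by gcongr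

/-- Master summed Frank–Wolfe gap bound for the momentum Frank–Wolfe iterates. -/
theorem momentum_fw_master_gap_bound
    (d : ℕ) (hd : 1 ≤ d)
    (X : Set (EuclideanSpace ℝ (Fin d))) (hXne : X.Nonempty)
    (hXcomp : IsCompact X) (hXconv : Convex ℝ X)
    (D : ℝ) (hD : 0 < D)
    (hdiam : ∀ u ∈ X, ∀ v ∈ X, ‖u - v‖ ≤ D)
    (f : EuclideanSpace ℝ (Fin d) → ℝ)
    (L : ℝ) (hL : 0 < L)
    (hdiff : Differentiable ℝ f)
    (hLip : ∀ u v', ‖gradient f u - gradient f v'‖ ≤ L * ‖u - v'‖)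
    (η : ℝ) (hη : 0 < η) (hη23 : η < 2 / 3)
    (x y z w v : ℕ → EuclideanSpace ℝ (Fin d))
    (hx0 : x 0 = z 0) (hy0 : y 0 = z 0) (hz0 : z 0 ∈ X)
    (hwX : ∀ t, w t ∈ X)
    (hwopt : ∀ t, ∀ w' ∈ X, ⟪w', -(v t)⟫ ≤ ⟪w t, -(v t)⟫)
    (hxrec : ∀ t : ℕ, x (t + 1)
      = x t + ((1 + 1 / (((t : ℝ) + 1) * ((t : ℝ) + 2))) * η) • (w t - x t))
    (hyrec : ∀ t : ℕ, y (t + 1) = z t + η • (w t - z t))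
    (hzrec : ∀ t : ℕ, z (t + 1)
      = (1 - 1 / ((t : ℝ) + 2)) • y (t + 1) + (1 / ((t : ℝ) + 2)) • x (t + 1))
    (T : ℕ) (hT : 1 ≤ T) :
    η * ∑ t ∈ Finset.Ico 1 T, fwGap f X (z t)
      ≤ (f (z 0) - sInf (f '' X)) + 4 * T * L * η ^ 2 * D ^ 2
        + 2 * η * D * ∑ t ∈ Finset.range T, ‖gradient f (z t) - v t‖
        + η * D * ∑ t ∈ Finset.range (T - 1),
            (1 / (((t : ℝ) + 1) * ((t : ℝ) + 2))) *
              (∑ i ∈ Finset.Ico (t + 1) T, 1 / ((i : ℝ) + 2)) *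
              ‖gradient f (z t) - v t‖ := by
  lift L to ℝ≥0 using hL.le
  exact momentum_fw_master_gap_bound_general hXconv hdiam
    (fun u _ => (hdiff u).hasGradientAt.hasFDerivAt.hasFDerivWithinAt)
    (.of_dist_le_mul fun u _ u' _ => by simpa only [dist_eq_norm] using hLip u u')
    hη.le hη23.le ⟨hx0, hxrec, hyrec, hzrec⟩ hz0 hwX (fun t => isMaxOn_iff.2 (hwopt t)) T
end
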